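/- arXiv:2105.13359 — 2 statements merged into one kernel-verified Lean document; each statement's English description precedes it below -/
import Mathlib

section
/- Value of the string order parameter in class AIII (Theorem 3, α = ω part). Let N_z, N_Z ≥ 0 be integers, z_1,…,z_{N_z} ∈ ℂ with |z_j| < 1, and Z_1,…,Z_{N_Z} ∈ ℂ with |Z_k| > 1 (no reality or conjugation constraint). Define the symbol t on the unit circle by t(z) = exp(W(z)) where W(z) = (1/2) Σ_{j=1}^{N_z} [ Log(1 − z_j/z) − Log(1 − conj(z_j)·z) ] + (1/2) Σ_{k=1}^{N_Z} [ Log(1 − z/Z_k) − Log(1 − 1/(conj(Z_k)·z)) ], with Log the principal branch of the logarithm. Then lim_{N→∞} |D_N[t]| exists and equals L^{1/4}, where L = ∏_{j1=1}^{N_z} ∏_{j2=1}^{N_z} (1 − z_{j1}·conj(z_{j2})) · ∏_{k1=1}^{N_Z} ∏_{k2=1}^{N_Z} (1 − (Z_{k1}·conj(Z_{k2}))^{-1}) / ∏_{j=1}^{N_z} ∏_{k=1}^{N_Z} |1 − z_j/Z_k|², a positive real number. (For the AIII chain with f(z) = e^{iθ} z^{-N_P} ∏_j (z−z_j) ∏_k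 (z−Z_k), the string order parameter lim_N ⟨Õ_ω(1)Õ_ω(N+1)⟩ equals lim_N |D_N[t]|² = L^{1/2}.) -/
open scoped BigOperators
open Filter

/-- The `k`-th Fourier coefficient of a symbol `t` on the unit circle. -/
noncomputable def symbolCoeff (t : ℂ → ℂ) (k : ℤ) : ℂ :=
  (1 / (2 * Real.pi)) *
    ∫ θ in (0:ℝ)..(2 * Real.pi),
      t (Complex.exp (Complex.I * (θ : ℂ))) * Complex.exp (-(Complex.I * (k : ℂ) * (θ : ℂ)))

/-- The `N × N` Toeplitz determinant `D_N[t]` generated by the symbol `t`. -/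
noncomputable def toeplitzDet (t : ℂ → ℂ) (N : ℕ) : ℂ :=
  Matrix.det (Matrix.of fun m n : Fin N => symbolCoeff t ((m : ℤ) - (n : ℤ)))

/-- The function `W(z)` built from principal-branch logarithms, so that `e^{W}` is the
(winding-number-removed) AIII symbol. -/
noncomputable def aiiiW (Nz NZ : ℕ) (z : Fin Nz → ℂ) (Z : Fin NZ → ℂ) (w : ℂ) : ℂ :=
  (1 / 2) * ∑ j, (Complex.log (1 - z j / w) - Complex.log (1 - (starRingEnd ℂ) (z j) * w)) +
  (1 / 2) * ∑ k, (Complex.log (1 - w / Z k) - Complex.log (1 - 1 / ((starRingEnd ℂ) (Z k) * w)))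

/-!
On the unit circle the symbol is `t = exp V`, where `V z = f z + g (1/z)` is purely imaginary and
`f`, `g` are analytic on a disc of radius larger than `1` and vanish at `0`. Let `E = ∑ k f_k g_k`.
Szegő's limit `D_N[t] → exp E` is obtained by deforming the symbol to `1` through `exp (s V)`,
`0 ≤ s ≤ 1`. By Jacobi's formula the derivative of `D_N[exp (s V)]` is the trace of
`adj T_N(t) * T_N(V t)`. For the analytic half of `V`, the difference `T_N(f t) - T_N(f) T_N(t)` is
a product of two Hankel matrices, while `T_N(f) T_N(t)` only contributes a multiple of
`tr T_N(f) = 0`. The Wiener–Hopf factorization solves `T_N(t) x = v`, for the columns `v` of the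
Hankel matrix, up to an exponentially small error. Since `|t| = 1`, the rows of `T_N(t)` have norm
at most `1`, so the entries of the adjugate are bounded by `1` and no lower bound on the determinant
is needed. Hence the derivative is `2 s E D_N[exp (s V)]` up to an error vanishing uniformly in `s`,
and Gronwall's argument gives the limit. For the AIII symbol `E` is a Hermitian form in the
logarithms `log (1 - b_i conj(b_l))`, and `exp (4 E)` is the product `L`.
-/

section Matrix

open Matrix ComplexOrder

variable {𝕜 n : Type*} [RCLike 𝕜] [Fintype n] [DecidableEq n]

lemma norm_det_sq_eq_prod_eigenvalues (M : Matrix n n 𝕜) :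
    ‖M.det‖ ^ 2 = ∏ i, (isHermitian_mul_conjTranspose_self M).eigenvalues i := by
  have h := (isHermitian_mul_conjTranspose_self M).det_eq_prod_eigenvalues
  rw [det_mul, det_conjTranspose, RCLike.star_def, RCLike.mul_conj] at h
  exact_mod_cast h

lemma sum_norm_sq_eq_sum_eigenvalues (M : Matrix n n 𝕜) :
    ∑ i, ∑ j, ‖M i j‖ ^ 2 = ∑ i, (isHermitian_mul_conjTranspose_self M).eigenvalues i := by
  have h := (isHermitian_mul_conjTranspose_self M).trace_eq_sum_eigenvalues
  simp only [trace, diag_apply, mul_apply, conjTranspose_apply, RCLike.star_def,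
    RCLike.mul_conj] at h
  exact_mod_cast h

lemma prod_le_exp_sum_sub_one {ι : Type*} (s : Finset ι) {x : ι → ℝ} (hx : ∀ i ∈ s, 0 ≤ x i) :
    ∏ i ∈ s, x i ≤ Real.exp (∑ i ∈ s, (x i - 1)) := by
  rw [Real.exp_sum]
  exact Finset.prod_le_prod hx fun i _ => by linarith [Real.add_one_le_exp (x i - 1)]

lemma norm_det_le_one_of_sum_row_norm_sq_le_one {M : Matrix n n 𝕜}
    (h : ∀ i, ∑ j, ‖M i j‖ ^ 2 ≤ 1) : ‖M.det‖ ≤ 1 := by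
  have hsum : ∑ i, ((isHermitian_mul_conjTranspose_self M).eigenvalues i - 1) ≤ 0 := by
    rw [Finset.sum_sub_distrib, ← sum_norm_sq_eq_sum_eigenvalues, ← Finset.sum_sub_distrib]
    exact Finset.sum_nonpos fun i _ => sub_nonpos.mpr (h i)
  rw [← sq_le_one_iff₀ (norm_nonneg _), norm_det_sq_eq_prod_eigenvalues]
  exact (prod_le_exp_sum_sub_one _ fun i _ =>
    (posSemidef_self_mul_conjTranspose M).eigenvalues_nonneg i).trans
      (Real.exp_le_one_iff.mpr hsum)

lemma norm_adjugate_le_one_of_sum_row_norm_sq_le_one {M : Matrix n n 𝕜}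
    (h : ∀ i, ∑ j, ‖M i j‖ ^ 2 ≤ 1) (i j : n) : ‖M.adjugate i j‖ ≤ 1 := by
  rw [adjugate_apply]
  refine norm_det_le_one_of_sum_row_norm_sq_le_one fun k => ?_
  rcases eq_or_ne k j with rfl | hk
  · rw [Finset.sum_eq_single i] <;> simp +contextual
  · simpa [updateRow_ne hk] using h k

/-- The error estimate behind approximate inversion: `adj M v` is `det M • x` up to
`adj M (v - M x)`. -/
lemma norm_dotProduct_adjugate_mulVec_sub_le {M : Matrix n n 𝕜} {r v x : n → 𝕜} {δ : ℝ}
    (hM : ∀ i j, ‖M.adjugate i j‖ ≤ 1) (hr : ∀ i, ‖r i‖ ≤ 1) (hx : ∀ i, ‖(v - M *ᵥ x) i‖ ≤ δ) :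
    ‖r ⬝ᵥ (M.adjugate *ᵥ v) - M.det * (r ⬝ᵥ x)‖ ≤ (Fintype.card n : ℝ) ^ 2 * δ := by
  have hsplit : r ⬝ᵥ (M.adjugate *ᵥ v) - M.det * (r ⬝ᵥ x) =
      r ⬝ᵥ (M.adjugate *ᵥ (v - M *ᵥ x)) := by
    rw [mulVec_sub, mulVec_mulVec, adjugate_mul, smul_mulVec, one_mulVec, dotProduct_sub,
      dotProduct_smul, smul_eq_mul]
  have hterm (i j : n) : ‖r i * (M.adjugate i j * (v - M *ᵥ x) j)‖ ≤ δ := by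
    rw [norm_mul, norm_mul]
    exact (mul_le_of_le_one_left (by positivity) (hr i)).trans
      ((mul_le_of_le_one_left (norm_nonneg _) (hM i j)).trans (hx j))
  rw [hsplit]
  simp only [dotProduct, mulVec, Finset.mul_sum] at hterm ⊢
  calc _ ≤ ∑ _i : n, ∑ _j : n, δ :=
        norm_sum_le_of_le _ fun i _ => norm_sum_le_of_le _ fun j _ => hterm i j
    _ = (Fintype.card n : ℝ) ^ 2 * δ := by
        simp only [Finset.sum_const, Finset.card_univ, nsmul_eq_mul]; ring

end Matrix

section Jacobi

open Matrix

variable {R n : Type*} [CommRing R] [Fintype n] [DecidableEq n]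

lemma trace_adjugate_mul (M M' : Matrix n n R) :
    (M.adjugate * M').trace = ∑ i, (M.updateCol i fun k => M' k i).det := by
  refine Finset.sum_congr rfl fun i _ => ?_
  rw [← cramer_apply, cramer_eq_adjugate_mulVec]
  rfl

lemma det_updateCol_eq_sum_perm (M : Matrix n n R) (i : n) (v : n → R) :
    (M.updateCol i v).det = ∑ σ : Equiv.Perm n, ((Equiv.Perm.sign σ : ℤ) : R) *
      ((∏ j ∈ Finset.univ.erase i, M (σ j) j) * v (σ i)) := by
  rw [det_apply']
  refine Finset.sum_congr rfl fun σ _ => ?_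
  rw [← Finset.prod_erase_mul _ _ (Finset.mem_univ i), updateCol_self]
  congr 2
  exact Finset.prod_congr rfl fun j hj => updateCol_ne (Finset.ne_of_mem_erase hj)

lemma hasDerivAt_det {𝕜 𝔸 : Type*} [NontriviallyNormedField 𝕜] [NormedCommRing 𝔸]
    [NormedAlgebra 𝕜 𝔸] {M : 𝕜 → Matrix n n 𝔸} {M' : Matrix n n 𝔸} {x : 𝕜}
    (h : ∀ i j, HasDerivAt (fun s => M s i j) (M' i j) x) :
    HasDerivAt (fun s => (M s).det) ((M x).adjugate * M').trace x := by
  simp only [trace_adjugate_mul, det_updateCol_eq_sum_perm]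
  rw [Finset.sum_comm]
  simp only [← Finset.mul_sum, det_apply']
  exact HasDerivAt.fun_sum fun σ _ => HasDerivAt.const_mul _ <| by
    simpa only [smul_eq_mul] using HasDerivAt.fun_finsetProd fun j _ => h (σ j) j

end Jacobi

section SymbolCoeff

open AddCircle MeasureTheory Metric

local instance fact_two_pi_pos : Fact (0 < 2 * Real.pi) := ⟨Real.two_pi_pos⟩

lemma symbolCoeff_eq_fourierCoeff (t : ℂ → ℂ) (k : ℤ) :
    symbolCoeff t k = fourierCoeff (fun x : AddCircle (2 * Real.pi) => t x.toCircle) k := by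
  rw [symbolCoeff, fourierCoeff_eq_intervalIntegral _ _ 0, zero_add, Complex.real_smul]
  congr 1
  · push_cast; rfl
  · refine intervalIntegral.integral_congr fun θ _ => ?_
    simp only [fourier_coe_apply, smul_eq_mul, toCircle_apply_mk, Circle.coe_exp]
    rw [mul_comm]
    congr 2
    · push_cast; field_simp
    · congr 1; push_cast; field_simp

lemma symbolCoeff_congr {t u : ℂ → ℂ} (h : ∀ z, ‖z‖ = 1 → t z = u z) (k : ℤ) :
    symbolCoeff t k = symbolCoeff u k := by
  simp only [symbolCoeff_eq_fourierCoeff, h _ (Circle.norm_coe _)]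

lemma symbolCoeff_comp_inv (t : ℂ → ℂ) (k : ℤ) :
    symbolCoeff (fun z => t z⁻¹) k = symbolCoeff t (-k) := by
  simp only [symbolCoeff_eq_fourierCoeff, fourierCoeff]
  rw [← integral_neg_eq_self]
  simp only [toCircle_neg, Circle.coe_inv, inv_inv, fourier_apply, neg_neg, neg_smul, smul_neg]

lemma symbolCoeff_one (k : ℤ) : symbolCoeff (fun _ => 1) k = if k = 0 then 1 else 0 := by
  have h : (fun _ : AddCircle (2 * Real.pi) => (1 : ℂ)) = fourier 0 := by
    ext x; exact fourier_zero.symm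
  rw [symbolCoeff_eq_fourierCoeff, h, fourierCoeff_fourier]
  simp [Pi.single_apply]

variable {t u : ℂ → ℂ}

lemma continuous_comp_toCircle (ht : ContinuousOn t (sphere 0 1)) :
    Continuous fun x : AddCircle (2 * Real.pi) => t x.toCircle :=
  ht.comp_continuous (continuous_subtype_val.comp continuous_toCircle)
    fun _ => mem_sphere_zero_iff_norm.mpr (Circle.norm_coe _)

lemma integrable_comp_toCircle (ht : ContinuousOn t (sphere 0 1)) :
    Integrable (fun x : AddCircle (2 * Real.pi) => t x.toCircle) haarAddCircle :=
  (continuous_comp_toCircle ht).integrable_of_hasCompactSupport (.of_compactSpace _)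

lemma exists_norm_le_of_continuousOn_sphere (ht : ContinuousOn t (sphere 0 1)) :
    ∃ B, ∀ z, ‖z‖ = 1 → ‖t z‖ ≤ B := by
  obtain ⟨B, hB⟩ := (isCompact_sphere (0 : ℂ) 1).exists_bound_of_continuousOn ht
  exact ⟨B, fun z hz => hB z (mem_sphere_zero_iff_norm.mpr hz)⟩

lemma continuousOn_comp_inv_sphere (ht : ContinuousOn t (sphere 0 1)) :
    ContinuousOn (fun z => t z⁻¹) (sphere 0 1) := by
  refine ht.comp (continuousOn_inv₀.mono fun z hz => ?_) fun z hz => ?_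
  · exact ne_of_mem_sphere hz one_ne_zero
  · rw [mem_sphere_zero_iff_norm] at hz ⊢
    rw [norm_inv, hz, inv_one]

lemma symbolCoeff_add (ht : ContinuousOn t (sphere 0 1)) (hu : ContinuousOn u (sphere 0 1))
    (k : ℤ) :
    symbolCoeff (fun z => t z + u z) k = symbolCoeff t k + symbolCoeff u k := by
  simp only [symbolCoeff_eq_fourierCoeff]
  exact congrFun (fourierCoeff.add (integrable_comp_toCircle ht) (integrable_comp_toCircle hu)) k

lemma sum_norm_symbolCoeff_sq_le {B : ℝ} (ht : ContinuousOn t (sphere 0 1))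
    (hB : ∀ z, ‖z‖ = 1 → ‖t z‖ ≤ B) (s : Finset ℤ) : ∑ k ∈ s, ‖symbolCoeff t k‖ ^ 2 ≤ B ^ 2 := by
  let f : C(AddCircle (2 * Real.pi), ℂ) := ⟨_, continuous_comp_toCircle ht⟩
  let F := ContinuousMap.toLp (E := ℂ) 2 haarAddCircle ℂ f
  have hF : F =ᵐ[haarAddCircle] f := ContinuousMap.coeFn_toLp _ _
  have hint : ∫ x, ‖F x‖ ^ 2 ∂haarAddCircle ≤ B ^ 2 := by
    rw [integral_congr_ae (g := fun x => ‖f x‖ ^ 2) (hF.mono fun x hx => by simp only [hx])]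
    calc ∫ x, ‖f x‖ ^ 2 ∂haarAddCircle ≤ ∫ _, B ^ 2 ∂haarAddCircle :=
          integral_mono_of_nonneg (.of_forall fun _ => by positivity) (integrable_const _)
            (.of_forall fun x => pow_le_pow_left₀ (norm_nonneg _) (hB _ (Circle.norm_coe _)) 2)
      _ = B ^ 2 := by simp
  have hcoeff (k : ℤ) : symbolCoeff t k = fourierCoeff F k := by
    rw [fourierCoeff_toLp, symbolCoeff_eq_fourierCoeff]; rfl
  simp only [hcoeff]
  exact (sum_le_hasSum _ (fun _ _ => by positivity) (hasSum_sq_fourierCoeff F)).trans hint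

lemma norm_symbolCoeff_le {B : ℝ} (ht : ContinuousOn t (sphere 0 1))
    (hB : ∀ z, ‖z‖ = 1 → ‖t z‖ ≤ B) (k : ℤ) : ‖symbolCoeff t k‖ ≤ B := by
  have h := sum_norm_symbolCoeff_sq_le ht hB {k}
  rw [Finset.sum_singleton] at h
  exact le_of_sq_le_sq h ((norm_nonneg _).trans (hB 1 norm_one))

lemma hasDerivAt_symbolCoeff_exp {V : ℂ → ℂ} (hV : ContinuousOn V (sphere 0 1)) (k : ℤ) (s : ℝ) :
    HasDerivAt (fun s : ℝ => symbolCoeff (fun z => Complex.exp (s * V z)) k)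
      (symbolCoeff (fun z => V z * Complex.exp (s * V z)) k) s := by
  obtain ⟨B, hB⟩ := exists_norm_le_of_continuousOn_sphere hV
  have hexp (s : ℝ) : ContinuousOn (fun z => Complex.exp (s * V z)) (sphere 0 1) := by fun_prop
  have hint {u : ℂ → ℂ} (hu : ContinuousOn u (sphere 0 1)) : Integrable
      (fun x : AddCircle (2 * Real.pi) => fourier (-k) x * u x.toCircle) haarAddCircle :=
    (integrable_comp_toCircle hu).fourier_smul (-k)
  have hF (r : ℝ) := hint (hexp r)
  have hF' := hint (hV.mul (hexp s))
  have hbound (x : AddCircle (2 * Real.pi)) (r : ℝ) (hr : r ∈ ball s 1) :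
      ‖(fourier (-k) x * (V x.toCircle * Complex.exp (r * V x.toCircle)) : ℂ)‖ ≤
        B * Real.exp ((|s| + 1) * B) := by
    have hx := hB _ (Circle.norm_coe x.toCircle)
    have hr' : |r| ≤ |s| + 1 := by
      rw [mem_ball, Real.dist_eq] at hr
      linarith [abs_sub_abs_le_abs_sub r s]
    rw [norm_mul, fourier_apply, Circle.norm_coe, one_mul, norm_mul]
    refine mul_le_mul hx ((Complex.norm_exp_le_exp_norm _).trans (Real.exp_le_exp.mpr ?_))
      (norm_nonneg _) ((norm_nonneg _).trans hx)
    rw [norm_mul, Complex.norm_real, Real.norm_eq_abs]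
    exact mul_le_mul hr' hx (norm_nonneg _) (by positivity)
  have hderiv (v : ℂ) (r : ℝ) :
      HasDerivAt (fun r : ℝ => Complex.exp (r * v)) (v * Complex.exp (r * v)) r := by
    simpa [mul_comm] using ((Complex.ofRealCLM.hasDerivAt (x := r)).mul_const v).cexp
  simp only [symbolCoeff_eq_fourierCoeff, fourierCoeff, smul_eq_mul]
  exact (hasDerivAt_integral_of_dominated_loc_of_deriv_le
    (F' := fun r x => fourier (-k) x * (V x.toCircle * Complex.exp (r * V x.toCircle)))
    (ball_mem_nhds s one_pos)
    (.of_forall fun r => (hF r).aestronglyMeasurable) (hF s) hF'.aestronglyMeasurable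
    (.of_forall hbound) (integrable_const _)
    (.of_forall fun x r _ => (hderiv _ r).const_mul _)).2

variable {F : ℂ → ℂ} {c : ℕ → ℂ}

lemma hasSum_symbolCoeff_mul (ht : ContinuousOn t (sphere 0 1)) (hc : Summable fun l => ‖c l‖)
    (hF : ∀ z, ‖z‖ = 1 → HasSum (fun l => c l * z ^ l) (F z)) (k : ℤ) :
    HasSum (fun l : ℕ => c l * symbolCoeff t (k - l)) (symbolCoeff (fun z => F z * t z) k) := by
  obtain ⟨B, hB⟩ := exists_norm_le_of_continuousOn_sphere ht
  have hchar (l : ℕ) (x : AddCircle (2 * Real.pi)) : (fourier (-(k - l)) x : ℂ) =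
      (x.toCircle : ℂ) ^ l * fourier (-k) x := by
    rw [neg_sub, sub_eq_add_neg, fourier_add, fourier_apply, toCircle_zsmul]
    norm_cast
  have h := hasSum_integral_of_dominated_convergence
    (F := fun (l : ℕ) (x : AddCircle (2 * Real.pi)) =>
      c l * (fourier (-(k - l)) x • t x.toCircle))
    (f := fun x => fourier (-k) x • (F x.toCircle * t x.toCircle))
    (μ := haarAddCircle) (fun l _ => ‖c l‖ * B)
    (fun l => (continuous_const.mul ((map_continuous (fourier _)).smul
      (continuous_comp_toCircle ht))).aestronglyMeasurable)
    (fun l => .of_forall fun x => ?_) (.of_forall fun _ => hc.mul_right B)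
    (integrable_const _) (.of_forall fun x => ?_)
  · simpa only [symbolCoeff_eq_fourierCoeff, fourierCoeff, integral_const_mul] using h
  · rw [norm_mul, norm_smul, fourier_apply, Circle.norm_coe, one_mul]
    gcongr
    exact hB _ (Circle.norm_coe _)
  · have h := (hF _ (Circle.norm_coe x.toCircle)).mul_right (fourier (-k) x * t x.toCircle)
    simp only [hchar, smul_eq_mul]
    convert! h using 1
    · ext l; ring
    · ring

lemma hasSum_symbolCoeff_comp_inv_mul (ht : ContinuousOn t (sphere 0 1))
    (hc : Summable fun l => ‖c l‖) (hF : ∀ z, ‖z‖ = 1 → HasSum (fun l => c l * z ^ l) (F z))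
    (k : ℤ) :
    HasSum (fun l : ℕ => c l * symbolCoeff t (k + l)) (symbolCoeff (fun z => F z⁻¹ * t z) k) := by
  have h := hasSum_symbolCoeff_mul (continuousOn_comp_inv_sphere ht) hc hF (-k)
  simp only [symbolCoeff_comp_inv] at h
  rw [← symbolCoeff_comp_inv] at h
  simpa only [inv_inv, neg_sub, sub_neg_eq_add, add_comm] using h

lemma symbolCoeff_powerSeries (hc : Summable fun l => ‖c l‖)
    (hF : ∀ z, ‖z‖ = 1 → HasSum (fun l => c l * z ^ l) (F z)) (k : ℤ) :
    symbolCoeff F k = if 0 ≤ k then c k.toNat else 0 := by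
  have h := hasSum_symbolCoeff_mul (t := fun _ => 1) continuousOn_const hc hF k
  simp only [mul_one, symbolCoeff_one] at h
  refine h.unique ?_
  split_ifs with hk
  · convert! hasSum_ite_eq k.toNat (c k.toNat) using 2 with l
    rcases eq_or_ne l k.toNat with rfl | hl
    · simp [hk]
    · rw [if_neg (by omega), if_neg hl, mul_zero]
  · convert! hasSum_zero using 2 with l
    rw [if_neg (by omega), mul_zero]

end SymbolCoeff

section TaylorCoeff

open Metric

/-- The `n`-th Taylor coefficient at the origin. -/
noncomputable def taylorCoeff (F : ℂ → ℂ) (n : ℕ) : ℂ :=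
  (n.factorial : ℂ)⁻¹ * iteratedDeriv n F 0

lemma taylorCoeff_zero (F : ℂ → ℂ) : taylorCoeff F 0 = F 0 := by
  simp [taylorCoeff]

lemma taylorCoeff_deriv (F : ℂ → ℂ) (n : ℕ) :
    taylorCoeff (deriv F) n = (n + 1) * taylorCoeff F (n + 1) := by
  have h : (n + 1 : ℂ) ≠ 0 := by exact_mod_cast n.succ_ne_zero
  rw [taylorCoeff, taylorCoeff, iteratedDeriv_succ', Nat.factorial_succ]
  push_cast
  field_simp

variable {F t : ℂ → ℂ} {R : ℝ}

lemma hasSum_taylorCoeff (hF : DifferentiableOn ℂ F (ball 0 R)) {z : ℂ} (hz : ‖z‖ < R) :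
    HasSum (fun n => taylorCoeff F n * z ^ n) (F z) := by
  convert! Complex.hasSum_taylorSeries_on_ball hF (mem_ball_zero_iff.mpr hz) using 2 with n
  rw [taylorCoeff, sub_zero, smul_eq_mul, smul_eq_mul]
  ring

lemma norm_taylorCoeff_le {r B : ℝ} (hF : DifferentiableOn ℂ F (ball 0 R)) (hr : 0 < r)
    (hrR : r < R) (hB : ∀ z, ‖z‖ ≤ r → ‖F z‖ ≤ B) (n : ℕ) : ‖taylorCoeff F n‖ ≤ B * r⁻¹ ^ n := by
  have h := Complex.norm_iteratedDeriv_le_of_forall_mem_sphere_norm_le n hr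
    (hF.diffContOnCl_ball (closedBall_subset_ball hrR))
    fun z hz => hB z (mem_sphere_zero_iff_norm.mp hz).le
  have hn : (0 : ℝ) < n.factorial := by exact_mod_cast n.factorial_pos
  rw [taylorCoeff, norm_mul, norm_inv, Complex.norm_natCast, inv_mul_le_iff₀ hn]
  refine h.trans_eq ?_
  rw [inv_pow]
  field_simp

lemma summable_norm_taylorCoeff (hF : DifferentiableOn ℂ F (ball 0 R)) (hR : 1 < R) :
    Summable fun n => ‖taylorCoeff F n‖ := by
  simpa using (hasSum_taylorCoeff hF (z := 1) (by simpa using hR)).summable.norm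

lemma continuousOn_sphere_of_differentiableOn_ball (hF : DifferentiableOn ℂ F (ball 0 R))
    (hR : 1 < R) : ContinuousOn F (sphere 0 1) :=
  hF.continuousOn.mono (sphere_subset_ball hR)

lemma symbolCoeff_eq_taylorCoeff (hF : DifferentiableOn ℂ F (ball 0 R)) (hR : 1 < R) (k : ℤ) :
    symbolCoeff F k = if 0 ≤ k then taylorCoeff F k.toNat else 0 :=
  symbolCoeff_powerSeries (summable_norm_taylorCoeff hF hR)
    (fun _ hz => hasSum_taylorCoeff hF (hz.trans_lt hR)) k

lemma symbolCoeff_natCast_eq_taylorCoeff (hF : DifferentiableOn ℂ F (ball 0 R)) (hR : 1 < R)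
    (n : ℕ) : symbolCoeff F n = taylorCoeff F n := by
  simp [symbolCoeff_eq_taylorCoeff hF hR]

lemma taylorCoeff_eq_of_hasSum (hF : DifferentiableOn ℂ F (ball 0 R)) (hR : 1 < R) {c : ℕ → ℂ}
    (h : ∀ z, ‖z‖ = 1 → HasSum (fun n => c n * z ^ n) (F z)) (n : ℕ) : taylorCoeff F n = c n := by
  have hc : Summable fun n => ‖c n‖ := by simpa using (h 1 norm_one).summable.norm
  rw [← symbolCoeff_natCast_eq_taylorCoeff hF hR, symbolCoeff_powerSeries hc h]
  simp

lemma hasSum_taylorCoeff_mul_symbolCoeff_sub (hF : DifferentiableOn ℂ F (ball 0 R)) (hR : 1 < R)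
    (ht : ContinuousOn t (sphere 0 1)) (k : ℤ) :
    HasSum (fun l : ℕ => taylorCoeff F l * symbolCoeff t (k - l))
      (symbolCoeff (fun z => F z * t z) k) :=
  hasSum_symbolCoeff_mul ht (summable_norm_taylorCoeff hF hR)
    (fun _ hz => hasSum_taylorCoeff hF (hz.trans_lt hR)) k

lemma hasSum_taylorCoeff_mul_symbolCoeff_add (hF : DifferentiableOn ℂ F (ball 0 R)) (hR : 1 < R)
    (ht : ContinuousOn t (sphere 0 1)) (k : ℤ) :
    HasSum (fun l : ℕ => taylorCoeff F l * symbolCoeff t (k + l))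
      (symbolCoeff (fun z => F z⁻¹ * t z) k) :=
  hasSum_symbolCoeff_comp_inv_mul ht (summable_norm_taylorCoeff hF hR)
    (fun _ hz => hasSum_taylorCoeff hF (hz.trans_lt hR)) k

end TaylorCoeff

section GeometricDecay

open Metric

variable {c : ℕ → ℂ} {A r : ℝ}

lemma norm_tsum_le_of_geometric_bound {E : Type*} [NormedAddCommGroup E] {c : ℕ → E} {σ : ℝ}
    (hσ0 : 0 ≤ σ) (hσ1 : σ < 1) (h : ∀ n, ‖c n‖ ≤ A * σ ^ n) : ‖∑' n, c n‖ ≤ A / (1 - σ) :=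
  tsum_of_norm_bounded ((hasSum_geometric_of_lt_one hσ0 hσ1).mul_left A) h

lemma norm_sub_sum_range_le_of_geometric_bound {E : Type*} [NormedAddCommGroup E] {c : ℕ → E}
    {S : E} {σ : ℝ} (hσ0 : 0 ≤ σ) (hσ1 : σ < 1) (hc : HasSum c S) (h : ∀ n, ‖c n‖ ≤ A * σ ^ n)
    (N : ℕ) : ‖S - ∑ n ∈ Finset.range N, c n‖ ≤ A / (1 - σ) * σ ^ N := by
  have hg := (hasSum_geometric_of_lt_one hσ0 hσ1).mul_left (A * σ ^ N)
  refine (((hasSum_nat_add_iff' N).mpr hc).norm_le_of_bounded hg fun n => ?_).trans_eq ?_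
  · rw [mul_assoc, ← pow_add, add_comm N]
    exact h (n + N)
  · rw [div_mul_eq_mul_div, div_eq_mul_inv]

lemma norm_mul_pow_le_geometric {s : ℝ} (hc : ∀ n, ‖c n‖ ≤ A * r⁻¹ ^ n) {z : ℂ} (hz : ‖z‖ ≤ s)
    (n : ℕ) : ‖c n * z ^ n‖ ≤ A * (s / r) ^ n := by
  rw [norm_mul, norm_pow, div_eq_inv_mul, mul_pow, ← mul_assoc]
  exact mul_le_mul (hc n) (pow_le_pow_left₀ (norm_nonneg z) hz n) (by positivity)
    ((norm_nonneg _).trans (hc n))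

lemma hasSum_powerSeries_of_geometric_bound (hr : 0 < r) (hc : ∀ n, ‖c n‖ ≤ A * r⁻¹ ^ n) {z : ℂ}
    (hz : ‖z‖ < r) : HasSum (fun n => c n * z ^ n) (∑' n, c n * z ^ n) :=
  (Summable.of_norm_bounded ((summable_geometric_of_lt_one (by positivity)
    ((div_lt_one hr).mpr hz)).mul_left A) (norm_mul_pow_le_geometric hc le_rfl)).hasSum

lemma norm_powerSeries_le_of_geometric_bound {s : ℝ} (hr : 0 < r) (hsr : s < r)
    (hc : ∀ n, ‖c n‖ ≤ A * r⁻¹ ^ n) {z : ℂ} (hz : ‖z‖ ≤ s) :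
    ‖∑' n, c n * z ^ n‖ ≤ A / (1 - s / r) :=
  norm_tsum_le_of_geometric_bound (div_nonneg ((norm_nonneg z).trans hz) hr.le)
    ((div_lt_one hr).mpr hsr) (norm_mul_pow_le_geometric hc hz)

lemma differentiableOn_powerSeries_of_geometric_bound (hr : 0 < r)
    (hc : ∀ n, ‖c n‖ ≤ A * r⁻¹ ^ n) :
    DifferentiableOn ℂ (fun z => ∑' n, c n * z ^ n) (ball 0 r) := by
  intro z hz
  obtain ⟨s, hzs, hsr⟩ := exists_between (mem_ball_zero_iff.mp hz)
  have hs : 0 ≤ s := (norm_nonneg z).trans hzs.le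
  refine DifferentiableAt.differentiableWithinAt ?_
  refine DifferentiableOn.differentiableAt (s := ball 0 s) ?_
    (isOpen_ball.mem_nhds (mem_ball_zero_iff.mpr hzs))
  exact Complex.differentiableOn_tsum_of_summable_norm
    ((summable_geometric_of_lt_one (div_nonneg hs hr.le) ((div_lt_one hr).mpr hsr)).mul_left A)
    (fun n => by fun_prop) isOpen_ball
    fun n w hw => norm_mul_pow_le_geometric hc (mem_ball_zero_iff.mp hw).le n

lemma hasSum_antidiagonal {M : Type*} [AddCommMonoid M] [TopologicalSpace M] [ContinuousAdd M]
    [RegularSpace M] {G : ℕ × ℕ → M} {S : M} (h : HasSum G S) :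
    HasSum (fun n => ∑ p ∈ Finset.HasAntidiagonal.antidiagonal n, G p) S := by
  refine HasSum.sigma
    (Finset.HasAntidiagonal.sigmaAntidiagonalEquivProd.hasSum_iff.mpr h) fun n => ?_
  rw [← Finset.sum_finset_coe]
  exact hasSum_fintype _

lemma summable_prod_add_of_geometric_bound {E : Type*} [NormedAddCommGroup E] [CompleteSpace E]
    {G : ℕ → E} {σ : ℝ} (hσ0 : 0 ≤ σ) (hσ1 : σ < 1) (hG : ∀ n, ‖G n‖ ≤ A * σ ^ n) :
    Summable fun p : ℕ × ℕ => G (p.1 + p.2) := by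
  have hs := summable_geometric_of_lt_one hσ0 hσ1
  refine .of_norm_bounded
    ((hs.mul_of_nonneg hs (fun _ => by positivity) fun _ => by positivity).mul_left A) fun p => ?_
  rw [← pow_add]
  exact hG _

lemma hasSum_of_hasSum_nat_add {G S : ℕ → ℂ} {T : ℂ} {σ : ℝ} (hσ0 : 0 ≤ σ) (hσ1 : σ < 1)
    (hG : ∀ n, ‖G n‖ ≤ A * σ ^ n) (hS : ∀ j, HasSum (fun l => G (j + l)) (S j))
    (hT : HasSum (fun n : ℕ => (n + 1) * G n) T) : HasSum S T := by
  have h := (summable_prod_add_of_geometric_bound hσ0 hσ1 hG).hasSum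
  have hdiag (n : ℕ) :
      ∑ p ∈ Finset.HasAntidiagonal.antidiagonal n, G (p.1 + p.2) = (n + 1) * G n := by
    rw [Finset.sum_congr rfl fun p hp => by rw [Finset.HasAntidiagonal.mem_antidiagonal.mp hp]]
    simp
  rw [hT.unique (by simpa only [hdiag] using hasSum_antidiagonal h)]
  exact h.prod_fiberwise hS

end GeometricDecay

section Toeplitz

open Matrix Metric

/-- The `N × N` Toeplitz matrix of a symbol. -/
noncomputable def toeplitzMatrix (t : ℂ → ℂ) (N : ℕ) : Matrix (Fin N) (Fin N) ℂ :=
  Matrix.of fun m n : Fin N => symbolCoeff t ((m : ℤ) - (n : ℤ))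

lemma toeplitzMatrix_comp_inv (t : ℂ → ℂ) (N : ℕ) :
    toeplitzMatrix (fun z => t z⁻¹) N = (toeplitzMatrix t N)ᵀ := by
  ext m n
  simp [toeplitzMatrix, symbolCoeff_comp_inv]

variable {f t : ℂ → ℂ} {R : ℝ}

lemma sum_norm_toeplitzMatrix_sq_le (ht : ContinuousOn t (sphere 0 1))
    (ht1 : ∀ z, ‖z‖ = 1 → ‖t z‖ ≤ 1) (N : ℕ) (m : Fin N) :
    ∑ n, ‖toeplitzMatrix t N m n‖ ^ 2 ≤ 1 := by
  have hinj : Function.Injective fun n : Fin N => (m : ℤ) - (n : ℤ) := fun a b hab =>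
    Fin.ext (by simpa using hab)
  have h := sum_norm_symbolCoeff_sq_le ht ht1 (Finset.univ.map ⟨_, hinj⟩)
  rwa [Finset.sum_map, one_pow] at h

lemma trace_toeplitzMatrix_eq_zero (hf : DifferentiableOn ℂ f (ball 0 R)) (hR : 1 < R)
    (hf0 : f 0 = 0) (N : ℕ) : (toeplitzMatrix f N).trace = 0 := by
  simp [toeplitzMatrix, trace, symbolCoeff_eq_taylorCoeff hf hR, taylorCoeff_zero, hf0]

lemma toeplitzMatrix_mul_apply_of_analytic (hf : DifferentiableOn ℂ f (ball 0 R)) (hR : 1 < R)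
    {N : ℕ} (m n : Fin N) :
    (toeplitzMatrix f N * toeplitzMatrix t N) m n =
      ∑ l ∈ Finset.range (m + 1), taylorCoeff f l * symbolCoeff t ((m : ℤ) - n - l) := by
  have hmN : Finset.range (m + 1) ⊆ Finset.range N := Finset.range_mono m.2
  simp only [mul_apply, toeplitzMatrix, of_apply]
  rw [← Finset.sum_range fun i : ℕ => symbolCoeff f ((m : ℤ) - i) * symbolCoeff t (i - (n : ℤ)),
    ← Finset.sum_subset hmN fun i _ hi => ?_, ← Finset.sum_range_reflect]
  · refine Finset.sum_congr rfl fun i hi => ?_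
    have hi' : i ≤ m := Nat.lt_succ_iff.mp (Finset.mem_range.mp hi)
    have hcast : ((m + 1 - 1 - i : ℕ) : ℤ) = m - i := by push_cast [hi']; simp
    rw [hcast, sub_sub_cancel, symbolCoeff_natCast_eq_taylorCoeff hf hR]
    congr 2
    ring
  · rw [Finset.mem_range, not_lt] at hi
    rw [symbolCoeff_eq_taylorCoeff hf hR, if_neg (by omega), zero_mul]

lemma hasSum_hankel_mul_hankel (hf : DifferentiableOn ℂ f (ball 0 R)) (hR : 1 < R)
    (ht : ContinuousOn t (sphere 0 1)) {N : ℕ} (m n : Fin N) :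
    HasSum (fun j : ℕ => taylorCoeff f (m + j + 1) * symbolCoeff t (-(j + n + 1)))
      ((toeplitzMatrix (fun z => f z * t z) N - toeplitzMatrix f N * toeplitzMatrix t N) m n) := by
  have h := (hasSum_nat_add_iff' (m + 1 : ℕ)).mpr
    (hasSum_taylorCoeff_mul_symbolCoeff_sub hf hR ht ((m : ℤ) - n))
  rw [Matrix.sub_apply, toeplitzMatrix_mul_apply_of_analytic hf hR]
  convert! h using 1
  ext j
  rw [add_comm (m : ℕ) j, add_assoc j]
  congr 2
  push_cast
  ring

lemma hasSum_dotProduct_mulVec {α S n : Type*} [CommSemiring S] [TopologicalSpace S]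
    [IsTopologicalSemiring S] [Fintype n] {v r : α → n → S} {G : Matrix n n S}
    (h : ∀ i k, HasSum (fun j => v j i * r j k) (G i k)) (B : Matrix n n S) :
    HasSum (fun j => r j ⬝ᵥ (B *ᵥ v j)) (B * G).trace := by
  simp only [trace, diag_apply, mul_apply, dotProduct, mulVec, Finset.mul_sum]
  refine hasSum_sum fun k _ => hasSum_sum fun i _ => ?_
  convert! (h i k).mul_left (B k i) using 2
  ring

lemma hasSum_trace_adjugate_mul_toeplitzMatrix_mul (hf : DifferentiableOn ℂ f (ball 0 R))
    (hR : 1 < R) (hf0 : f 0 = 0) (ht : ContinuousOn t (sphere 0 1)) (N : ℕ) :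
    HasSum (fun j : ℕ => (fun n : Fin N => symbolCoeff t (-(j + n + 1))) ⬝ᵥ
        ((toeplitzMatrix t N).adjugate *ᵥ fun m : Fin N => taylorCoeff f (m + j + 1)))
      ((toeplitzMatrix t N).adjugate * toeplitzMatrix (fun z => f z * t z) N).trace := by
  set T := toeplitzMatrix t N
  have hanalytic : (T.adjugate * (toeplitzMatrix f N * T)).trace = 0 := by
    rw [← mul_assoc, trace_mul_comm, ← mul_assoc, mul_adjugate, smul_mul, one_mul, trace_smul,
      trace_toeplitzMatrix_eq_zero hf hR hf0, smul_zero]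
  have h := hasSum_dotProduct_mulVec (hasSum_hankel_mul_hankel hf hR ht (N := N)) T.adjugate
  rwa [mul_sub, trace_sub, hanalytic, sub_zero] at h

end Toeplitz

section WienerHopf

open Matrix Metric

/-- The symbol `z ↦ exp (φ z + ψ (1/z))`, given by its Wiener–Hopf factorization. -/
noncomputable def expSymbol (φ ψ : ℂ → ℂ) (z : ℂ) : ℂ :=
  Complex.exp (φ z + ψ z⁻¹)

/-- The exponent `∑ k f_k g_k` of Szegő's strong limit theorem for the symbol `exp (f(z) + g(1/z))`,
in terms of Taylor coefficients. -/
noncomputable def szegoExponent (f g : ℂ → ℂ) : ℂ :=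
  ∑' k : ℕ, taylorCoeff f (k + 1) * ((k + 1) * taylorCoeff g (k + 1))

/-- The symbol `f(z) / exp (ψ (1/z))`. -/
noncomputable def divExpInv (f ψ : ℂ → ℂ) (z : ℂ) : ℂ :=
  Complex.exp (-ψ z⁻¹) * f z

/-- The analytic part of `z ^ (-(j + 1)) * h z`. -/
noncomputable def analyticTail (h : ℂ → ℂ) (j : ℕ) (z : ℂ) : ℂ :=
  ∑' l : ℕ, symbolCoeff h (l + j + 1 : ℕ) * z ^ l

section AnalyticTail

variable {h E : ℂ → ℂ} {A r R : ℝ}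

lemma norm_symbolCoeff_add_le (hh : ∀ n : ℕ, ‖symbolCoeff h n‖ ≤ A * r⁻¹ ^ n)
    (j l : ℕ) : ‖symbolCoeff h (l + j + 1 : ℕ)‖ ≤ A * r⁻¹ ^ (j + 1) * r⁻¹ ^ l := by
  refine (hh _).trans_eq ?_
  rw [mul_assoc, ← pow_add]
  congr 2
  ring

lemma differentiableOn_analyticTail (hr : 0 < r)
    (hh : ∀ n : ℕ, ‖symbolCoeff h n‖ ≤ A * r⁻¹ ^ n) (j : ℕ) :
    DifferentiableOn ℂ (analyticTail h j) (ball 0 r) :=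
  differentiableOn_powerSeries_of_geometric_bound hr (norm_symbolCoeff_add_le hh j)

lemma norm_analyticTail_le {s : ℝ} (hr : 0 < r) (hsr : s < r)
    (hh : ∀ n : ℕ, ‖symbolCoeff h n‖ ≤ A * r⁻¹ ^ n) (j : ℕ) {z : ℂ} (hz : ‖z‖ ≤ s) :
    ‖analyticTail h j z‖ ≤ A * r⁻¹ ^ (j + 1) / (1 - s / r) :=
  norm_powerSeries_le_of_geometric_bound hr hsr (norm_symbolCoeff_add_le hh j) hz

lemma symbolCoeff_analyticTail (hr : 1 < r)
    (hh : ∀ n : ℕ, ‖symbolCoeff h n‖ ≤ A * r⁻¹ ^ n) (j : ℕ) (k : ℤ) :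
    symbolCoeff (analyticTail h j) k = if 0 ≤ k then symbolCoeff h (k + j + 1) else 0 := by
  have hr0 := one_pos.trans hr
  have hsum (z : ℂ) (hz : ‖z‖ ≤ 1) := hasSum_powerSeries_of_geometric_bound hr0
    (norm_symbolCoeff_add_le hh j) (hz.trans_lt hr)
  rw [symbolCoeff_powerSeries (F := analyticTail h j)
    (by simpa using (hsum 1 norm_one.le).summable.norm) fun z hz => hsum z hz.le]
  split_ifs with hk
  · push_cast [Int.toNat_of_nonneg hk]; rfl
  · rfl

lemma symbolCoeff_comp_inv_mul_analyticTail (hE : DifferentiableOn ℂ E (ball 0 R)) (hR : 1 < R)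
    (hhc : ContinuousOn h (sphere 0 1)) (hr : 1 < r)
    (hh : ∀ n : ℕ, ‖symbolCoeff h n‖ ≤ A * r⁻¹ ^ n) (j m : ℕ) :
    symbolCoeff (fun z => E z⁻¹ * analyticTail h j z) m =
      symbolCoeff (fun z => E z⁻¹ * h z) (m + j + 1 : ℕ) := by
  have htail := continuousOn_sphere_of_differentiableOn_ball
    (differentiableOn_analyticTail (one_pos.trans hr) hh j) hr
  refine (hasSum_taylorCoeff_mul_symbolCoeff_add hE hR htail m).unique ?_
  convert! hasSum_taylorCoeff_mul_symbolCoeff_add hE hR hhc (m + j + 1 : ℕ) using 2 with l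
  rw [symbolCoeff_analyticTail hr hh, if_pos (by positivity)]
  push_cast
  ring_nf

lemma hasSum_symbolCoeff_comp_inv_mul_analyticTail (hE : DifferentiableOn ℂ E (ball 0 R))
    (hR : 1 < R) (hr : 1 < r) (hh : ∀ n : ℕ, ‖symbolCoeff h n‖ ≤ A * r⁻¹ ^ n) (j : ℕ) :
    HasSum (fun l : ℕ => taylorCoeff E (j + l + 1) * symbolCoeff h (j + l + 1 : ℕ))
      (symbolCoeff (fun z => E z⁻¹ * analyticTail h j z) (-(j + 1 : ℕ))) := by
  have htail := continuousOn_sphere_of_differentiableOn_ball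
    (differentiableOn_analyticTail (one_pos.trans hr) hh j) hr
  have hsum := (hasSum_nat_add_iff' (j + 1)).mpr
    (hasSum_taylorCoeff_mul_symbolCoeff_add hE hR htail (-(j + 1 : ℕ)))
  rw [Finset.sum_eq_zero fun l hl => ?_, sub_zero] at hsum
  · convert! hsum using 2 with l
    rw [symbolCoeff_analyticTail hr hh, if_pos (by push_cast; omega)]
    congr 2
    · ring
    · push_cast; ring
  · rw [Finset.mem_range] at hl
    rw [symbolCoeff_analyticTail hr hh, if_neg (by push_cast; omega), mul_zero]

end AnalyticTail

section Solution

variable {f φ ψ : ℂ → ℂ} {A M P r R : ℝ}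

lemma continuousOn_expSymbol (hφ : ContinuousOn φ (sphere 0 1)) (hψ : ContinuousOn ψ (sphere 0 1)) :
    ContinuousOn (expSymbol φ ψ) (sphere 0 1) :=
  (hφ.add (continuousOn_comp_inv_sphere hψ)).cexp

lemma norm_symbolCoeff_comp_inv_mul_le {p : ℂ → ℂ} (hf : DifferentiableOn ℂ f (ball 0 R))
    (hp : DifferentiableOn ℂ p (ball 0 R)) (hr : 1 < r) (hrR : r < R)
    (hM : ∀ z, ‖z‖ ≤ r → ‖f z‖ ≤ M) (hP : ∀ z, ‖z‖ ≤ r → ‖p z‖ ≤ P) (n : ℕ) :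
    ‖symbolCoeff (fun z => p z⁻¹ * f z) n‖ ≤ P * M / (1 - r⁻¹) * r⁻¹ ^ n := by
  have hr0 := one_pos.trans hr
  have hR := hr.trans hrR
  have hP0 : 0 ≤ P := (norm_nonneg _).trans (hP 0 (by simpa using hr0.le))
  have hM0 : 0 ≤ M := (norm_nonneg _).trans (hM 0 (by simpa using hr0.le))
  have hinv : r⁻¹ < 1 := inv_lt_one_of_one_lt₀ hr
  have h := hasSum_taylorCoeff_mul_symbolCoeff_add hp hR
    (continuousOn_sphere_of_differentiableOn_ball hf hR) n
  rw [← h.tsum_eq, div_mul_eq_mul_div]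
  refine norm_tsum_le_of_geometric_bound (by positivity) hinv fun l => ?_
  rw [norm_mul, ← Nat.cast_add, symbolCoeff_natCast_eq_taylorCoeff hf hR]
  calc ‖taylorCoeff p l‖ * ‖taylorCoeff f (n + l)‖
      ≤ (P * r⁻¹ ^ l) * (M * r⁻¹ ^ (n + l)) :=
        mul_le_mul (norm_taylorCoeff_le hp hr0 hrR hP l) (norm_taylorCoeff_le hf hr0 hrR hM _)
          (norm_nonneg _) (by positivity)
    _ ≤ (P * 1) * (M * r⁻¹ ^ (n + l)) := by
        gcongr
        exact pow_le_one₀ (by positivity) hinv.le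
    _ = P * M * r⁻¹ ^ n * r⁻¹ ^ l := by rw [pow_add]; ring

lemma continuousOn_divExpInv (hf : ContinuousOn f (sphere 0 1)) (hψ : ContinuousOn ψ (sphere 0 1)) :
    ContinuousOn (divExpInv f ψ) (sphere 0 1) :=
  (continuousOn_comp_inv_sphere hψ).neg.cexp.mul hf

lemma symbolCoeff_exp_comp_inv_mul_analyticTail (hf : DifferentiableOn ℂ f (ball 0 R))
    (hψ : DifferentiableOn ℂ ψ (ball 0 R)) (hR : 1 < R) (hr : 1 < r)
    (hh : ∀ n : ℕ, ‖symbolCoeff (divExpInv f ψ) n‖ ≤ A * r⁻¹ ^ n) (j m : ℕ) :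
    symbolCoeff (fun z => Complex.exp (ψ z⁻¹) * analyticTail (divExpInv f ψ) j z) m =
      taylorCoeff f (m + j + 1) := by
  have hcont := continuousOn_divExpInv (continuousOn_sphere_of_differentiableOn_ball hf hR)
    (continuousOn_sphere_of_differentiableOn_ball hψ hR)
  rw [symbolCoeff_comp_inv_mul_analyticTail hψ.cexp hR hcont hr hh,
    ← symbolCoeff_natCast_eq_taylorCoeff hf hR]
  refine symbolCoeff_congr (fun z _ => ?_) _
  rw [divExpInv, ← mul_assoc, ← Complex.exp_add, add_neg_cancel, Complex.exp_zero, one_mul]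

lemma hasSum_szegoExponent (hf : DifferentiableOn ℂ f (ball 0 R))
    (hψ : DifferentiableOn ℂ ψ (ball 0 R)) (hR : 1 < R) :
    HasSum (fun n : ℕ => (n + 1) * (taylorCoeff (fun z => Complex.exp (ψ z)) (n + 1) *
      symbolCoeff (divExpInv f ψ) (n + 1 : ℕ))) (szegoExponent f ψ) := by
  have hfc := continuousOn_sphere_of_differentiableOn_ball hf hR
  have hcont := continuousOn_divExpInv hfc (continuousOn_sphere_of_differentiableOn_ball hψ hR)
  have hψ' (z : ℂ) (hz : ‖z‖ = 1) : deriv (fun w => Complex.exp (ψ w)) z⁻¹ =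
      Complex.exp (ψ z⁻¹) * deriv ψ z⁻¹ := by
    have hz' : z⁻¹ ∈ ball (0 : ℂ) R := by rwa [mem_ball_zero_iff, norm_inv, hz, inv_one]
    exact (hψ.differentiableAt (isOpen_ball.mem_nhds hz')).hasDerivAt.cexp.deriv
  have hquot : symbolCoeff (fun z => deriv (fun w => Complex.exp (ψ w)) z⁻¹ * divExpInv f ψ z) 1 =
      symbolCoeff (fun z => deriv ψ z⁻¹ * f z) 1 := by
    refine symbolCoeff_congr (fun z hz => ?_) 1
    rw [hψ' z hz, divExpInv, Complex.exp_neg]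
    field_simp [Complex.exp_ne_zero]
  have hexponent : symbolCoeff (fun z => deriv ψ z⁻¹ * f z) 1 = szegoExponent f ψ := by
    rw [← (hasSum_taylorCoeff_mul_symbolCoeff_add (hψ.deriv isOpen_ball) hR hfc 1).tsum_eq,
      szegoExponent]
    refine tsum_congr fun k => ?_
    rw [taylorCoeff_deriv, ← symbolCoeff_natCast_eq_taylorCoeff hf hR, mul_comm]
    push_cast
    rw [add_comm]
  rw [← hexponent, ← hquot]
  convert! hasSum_taylorCoeff_mul_symbolCoeff_add (hψ.cexp.deriv isOpen_ball) hR hcont 1 using 2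
    with n
  rw [taylorCoeff_deriv, mul_assoc]
  push_cast
  rw [add_comm (1 : ℤ)]

/-- Summed over `j`, the `l`-series of `hasSum_symbolCoeff_comp_inv_mul_analyticTail` run over the
antidiagonals, which produces the weights `n` of Szegő's exponent. -/
lemma hasSum_symbolCoeff_exp_comp_inv_mul_analyticTail (hf : DifferentiableOn ℂ f (ball 0 R))
    (hψ : DifferentiableOn ℂ ψ (ball 0 R)) (hr : 1 < r) (hrR : r < R)
    (hP : ∀ z, ‖z‖ ≤ r → ‖Complex.exp (ψ z)‖ ≤ P)
    (hh : ∀ n : ℕ, ‖symbolCoeff (divExpInv f ψ) n‖ ≤ A * r⁻¹ ^ n) :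
    HasSum (fun j : ℕ => symbolCoeff
      (fun z => Complex.exp (ψ z⁻¹) * analyticTail (divExpInv f ψ) j z) (-(j + 1 : ℕ)))
      (szegoExponent f ψ) := by
  have hr0 := one_pos.trans hr
  have hR := hr.trans hrR
  have hinv : r⁻¹ < 1 := inv_lt_one_of_one_lt₀ hr
  have hP0 : 0 ≤ P := (norm_nonneg _).trans (hP 0 (by simpa using hr0.le))
  have hG (n : ℕ) : ‖taylorCoeff (fun z => Complex.exp (ψ z)) (n + 1) *
      symbolCoeff (divExpInv f ψ) (n + 1 : ℕ)‖ ≤ P * A * r⁻¹ ^ n := by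
    have hA0 : 0 ≤ A := by simpa using (norm_nonneg _).trans (hh 0)
    have hpow : r⁻¹ ^ (n + 1) ≤ 1 := pow_le_one₀ (by positivity) hinv.le
    rw [norm_mul, mul_assoc]
    refine mul_le_mul
      ((norm_taylorCoeff_le hψ.cexp hr0 hrR hP (n + 1)).trans (mul_le_of_le_one_right hP0 hpow))
      ((hh (n + 1)).trans ?_) (norm_nonneg _) hP0
    exact mul_le_mul_of_nonneg_left
      (pow_le_pow_of_le_one (by positivity) hinv.le n.le_succ) hA0
  exact hasSum_of_hasSum_nat_add (inv_nonneg.mpr hr0.le) hinv hG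
    (fun j => hasSum_symbolCoeff_comp_inv_mul_analyticTail (E := fun z => Complex.exp (ψ z))
      hψ.cexp hR hr hh j) (hasSum_szegoExponent hf hψ hR)

end Solution
end WienerHopf

section ToeplitzSolution

open Matrix Metric

variable {f φ ψ : ℂ → ℂ} {A P r₁ r R : ℝ}

/-- The power series coefficients `x i` of the solution of the semi-infinite Toeplitz system
`∑ i, t_{m-i} x i = f_{m+j+1}` (`m ≥ 0`), where `t = expSymbol φ ψ`. -/
noncomputable def toeplitzSolution (f φ ψ : ℂ → ℂ) (j i : ℕ) : ℂ :=
  taylorCoeff (fun z => Complex.exp (-φ z) * analyticTail (divExpInv f ψ) j z) i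

lemma differentiableOn_exp_neg_mul_analyticTail (hφ : DifferentiableOn ℂ φ (ball 0 R))
    (hr : 0 < r) (hrR : r < R) (hh : ∀ n : ℕ, ‖symbolCoeff (divExpInv f ψ) n‖ ≤ A * r⁻¹ ^ n)
    (j : ℕ) :
    DifferentiableOn ℂ (fun z => Complex.exp (-φ z) * analyticTail (divExpInv f ψ) j z)
      (ball 0 r) :=
  (hφ.mono (ball_subset_ball hrR.le)).neg.cexp.mul (differentiableOn_analyticTail hr hh j)

lemma hasSum_toeplitzSolution_mul_symbolCoeff (hφ : DifferentiableOn ℂ φ (ball 0 R))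
    (hψ : ContinuousOn ψ (sphere 0 1)) (hr : 1 < r) (hrR : r < R)
    (hh : ∀ n : ℕ, ‖symbolCoeff (divExpInv f ψ) n‖ ≤ A * r⁻¹ ^ n) (j : ℕ) (k : ℤ) :
    HasSum (fun i : ℕ => toeplitzSolution f φ ψ j i * symbolCoeff (expSymbol φ ψ) (k - i))
      (symbolCoeff (fun z => Complex.exp (ψ z⁻¹) * analyticTail (divExpInv f ψ) j z) k) := by
  have hφc := continuousOn_sphere_of_differentiableOn_ball hφ (hr.trans hrR)
  have h := hasSum_taylorCoeff_mul_symbolCoeff_sub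
    (differentiableOn_exp_neg_mul_analyticTail hφ (one_pos.trans hr) hrR hh j) hr
    (continuousOn_expSymbol hφc hψ) k
  convert! h using 1
  refine symbolCoeff_congr (fun z _ => ?_) k
  rw [mul_right_comm, expSymbol, ← Complex.exp_add, neg_add_cancel_left]

lemma norm_toeplitzSolution_le (hφ : DifferentiableOn ℂ φ (ball 0 R)) (hr₁ : 0 < r₁)
    (hr : r₁ < r) (hrR : r < R) (hP : ∀ z, ‖z‖ ≤ r → ‖Complex.exp (-φ z)‖ ≤ P)
    (hh : ∀ n : ℕ, ‖symbolCoeff (divExpInv f ψ) n‖ ≤ A * r⁻¹ ^ n) (j i : ℕ) :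
    ‖toeplitzSolution f φ ψ j i‖ ≤ P * (A * r⁻¹ ^ (j + 1) / (1 - r₁ / r)) * r₁⁻¹ ^ i := by
  have hr0 := hr₁.trans hr
  refine norm_taylorCoeff_le
    (differentiableOn_exp_neg_mul_analyticTail hφ hr0 hrR hh j) hr₁ hr (fun z hz => ?_) i
  rw [norm_mul]
  exact mul_le_mul (hP z (hz.trans hr.le)) (norm_analyticTail_le hr0 hr hh j hz) (norm_nonneg _)
    ((norm_nonneg _).trans (hP 0 (by simpa using hr0.le)))

lemma norm_sub_sum_toeplitzSolution_mul_symbolCoeff_le (hφ : DifferentiableOn ℂ φ (ball 0 R))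
    (hψ : ContinuousOn ψ (sphere 0 1)) (hr₁ : 1 < r₁) (hr : r₁ < r) (hrR : r < R)
    (hP : ∀ z, ‖z‖ ≤ r → ‖Complex.exp (-φ z)‖ ≤ P)
    (hh : ∀ n : ℕ, ‖symbolCoeff (divExpInv f ψ) n‖ ≤ A * r⁻¹ ^ n)
    (ht : ∀ z, ‖z‖ = 1 → ‖expSymbol φ ψ z‖ ≤ 1) (j : ℕ) (k : ℤ) (N : ℕ) :
    ‖symbolCoeff (fun z => Complex.exp (ψ z⁻¹) * analyticTail (divExpInv f ψ) j z) k -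
      ∑ i ∈ Finset.range N, toeplitzSolution f φ ψ j i * symbolCoeff (expSymbol φ ψ) (k - i)‖ ≤
      P * (A * r⁻¹ ^ (j + 1) / (1 - r₁ / r)) / (1 - r₁⁻¹) * r₁⁻¹ ^ N := by
  have hφc := continuousOn_sphere_of_differentiableOn_ball hφ ((hr₁.trans hr).trans hrR)
  refine norm_sub_sum_range_le_of_geometric_bound (by positivity) (inv_lt_one_of_one_lt₀ hr₁)
    (hasSum_toeplitzSolution_mul_symbolCoeff hφ hψ (hr₁.trans hr) hrR hh j k) (fun i => ?_) N
  rw [norm_mul]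
  exact (mul_le_of_le_one_right (norm_nonneg _)
    (norm_symbolCoeff_le (continuousOn_expSymbol hφc hψ) ht _)).trans
    (norm_toeplitzSolution_le hφ (one_pos.trans hr₁) hr hrR hP hh j i)

lemma toeplitzMatrix_mulVec_apply (t : ℂ → ℂ) (x : ℕ → ℂ) {N : ℕ} (m : Fin N) :
    (toeplitzMatrix t N *ᵥ fun i : Fin N => x i) m =
      ∑ i ∈ Finset.range N, x i * symbolCoeff t ((m : ℤ) - i) := by
  simp [mulVec, dotProduct, toeplitzMatrix, Finset.sum_range, mul_comm]

lemma dotProduct_symbolCoeff_neg (t : ℂ → ℂ) (x : ℕ → ℂ) (N j : ℕ) :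
    (fun n : Fin N => symbolCoeff t (-(j + n + 1))) ⬝ᵥ (fun i : Fin N => x i) =
      ∑ i ∈ Finset.range N, x i * symbolCoeff t (-(j + 1 : ℕ) - i) := by
  rw [Finset.sum_range, dotProduct]
  refine Finset.sum_congr rfl fun i _ => ?_
  rw [mul_comm]
  congr 2
  push_cast
  ring

lemma norm_dotProduct_adjugate_mulVec_toeplitz_sub_le (hf : DifferentiableOn ℂ f (ball 0 R))
    (hφ : DifferentiableOn ℂ φ (ball 0 R)) (hψ : DifferentiableOn ℂ ψ (ball 0 R))
    (hr₁ : 1 < r₁) (hr : r₁ < r) (hrR : r < R) (hP : ∀ z, ‖z‖ ≤ r → ‖Complex.exp (-φ z)‖ ≤ P)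
    (hh : ∀ n : ℕ, ‖symbolCoeff (divExpInv f ψ) n‖ ≤ A * r⁻¹ ^ n)
    (ht : ∀ z, ‖z‖ = 1 → ‖expSymbol φ ψ z‖ ≤ 1) (N j : ℕ) :
    ‖(fun n : Fin N => symbolCoeff (expSymbol φ ψ) (-(j + n + 1))) ⬝ᵥ
        ((toeplitzMatrix (expSymbol φ ψ) N).adjugate *ᵥ
          fun m : Fin N => taylorCoeff f (m + j + 1)) -
      (toeplitzMatrix (expSymbol φ ψ) N).det * symbolCoeff
        (fun z => Complex.exp (ψ z⁻¹) * analyticTail (divExpInv f ψ) j z) (-(j + 1 : ℕ))‖ ≤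
      (N ^ 2 + 1) *
        (P * (A * r⁻¹ ^ (j + 1) / (1 - r₁ / r)) / (1 - r₁⁻¹) * r₁⁻¹ ^ N) := by
  have hr1 := hr₁.trans hr
  have hR := hr1.trans hrR
  have hψc := continuousOn_sphere_of_differentiableOn_ball hψ hR
  have htc := continuousOn_expSymbol (continuousOn_sphere_of_differentiableOn_ball hφ hR) hψc
  have hrow := sum_norm_toeplitzMatrix_sq_le htc ht N
  have herr (k : ℤ) := norm_sub_sum_toeplitzSolution_mul_symbolCoeff_le hφ hψc hr₁ hr hrR hP hh ht
    j k N
  have hsystem (m : Fin N) := herr m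
  simp only [← toeplitzMatrix_mulVec_apply,
    symbolCoeff_exp_comp_inv_mul_analyticTail hf hψ hR hr1 hh] at hsystem
  have hpairing := herr (-(j + 1 : ℕ))
  rw [← dotProduct_symbolCoeff_neg, norm_sub_rev] at hpairing
  have hadj := norm_dotProduct_adjugate_mulVec_sub_le
    (norm_adjugate_le_one_of_sum_row_norm_sq_le_one hrow)
    (fun n : Fin N => norm_symbolCoeff_le htc ht (-(j + n + 1))) hsystem
  rw [Fintype.card_fin] at hadj
  rw [add_one_mul]
  refine (norm_sub_le_norm_sub_add_norm_sub _ _ _).trans (add_le_add hadj ?_)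
  rw [← mul_sub, norm_mul]
  exact (mul_le_of_le_one_left (norm_nonneg _)
    (norm_det_le_one_of_sum_row_norm_sq_le_one hrow)).trans hpairing

end ToeplitzSolution

section LogDerivative

open Matrix Metric

variable {f : ℂ → ℂ} {r₁ r R : ℝ}

lemma exists_norm_le_of_continuousOn_ball (hf : ContinuousOn f (ball 0 R)) (hrR : r < R) :
    ∃ M, ∀ z, ‖z‖ ≤ r → ‖f z‖ ≤ M := by
  obtain ⟨M, hM⟩ := (isCompact_closedBall (0 : ℂ) r).exists_bound_of_continuousOn
    (hf.mono (closedBall_subset_ball hrR))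
  exact ⟨M, fun z hz => hM z (mem_closedBall_zero_iff.mpr hz)⟩

lemma exists_norm_trace_adjugate_sub_le (hf : DifferentiableOn ℂ f (ball 0 R)) (hf0 : f 0 = 0)
    (hr₁ : 1 < r₁) (hr : r₁ < r) (hrR : r < R) (P : ℝ) :
    ∃ C : ℝ, ∀ φ ψ : ℂ → ℂ, DifferentiableOn ℂ φ (ball 0 R) → DifferentiableOn ℂ ψ (ball 0 R) →
      (∀ z, ‖z‖ ≤ r → ‖Complex.exp (-φ z)‖ ≤ P) → (∀ z, ‖z‖ ≤ r → ‖Complex.exp (ψ z)‖ ≤ P) →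
      (∀ z, ‖z‖ ≤ r → ‖Complex.exp (-ψ z)‖ ≤ P) →
      (∀ z, ‖z‖ = 1 → ‖expSymbol φ ψ z‖ ≤ 1) → ∀ N : ℕ,
        ‖((toeplitzMatrix (expSymbol φ ψ) N).adjugate *
            toeplitzMatrix (fun z => f z * expSymbol φ ψ z) N).trace -
          (toeplitzMatrix (expSymbol φ ψ) N).det * szegoExponent f ψ‖ ≤
        C * ((N ^ 2 + 1) * r₁⁻¹ ^ N) := by
  have hr1 := hr₁.trans hr
  have hR := hr1.trans hrR
  have hr0 := one_pos.trans hr1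
  obtain ⟨M, hM⟩ := exists_norm_le_of_continuousOn_ball hf.continuousOn hrR
  set A := P * M / (1 - r⁻¹)
  set K := P * (A / (1 - r₁ / r)) / (1 - r₁⁻¹) * r⁻¹
  refine ⟨K / (1 - r⁻¹), fun φ ψ hφ hψ hPφ hPψ hPψ' ht N => ?_⟩
  have hh := norm_symbolCoeff_comp_inv_mul_le hf hψ.neg.cexp hr1 hrR hM hPψ'
  have hsum := (hasSum_trace_adjugate_mul_toeplitzMatrix_mul hf hR hf0 (continuousOn_expSymbol
    (continuousOn_sphere_of_differentiableOn_ball hφ hR)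
    (continuousOn_sphere_of_differentiableOn_ball hψ hR)) N).sub
    ((hasSum_symbolCoeff_exp_comp_inv_mul_analyticTail hf hψ hr1 hrR hPψ hh).mul_left
      (toeplitzMatrix (expSymbol φ ψ) N).det)
  rw [← hsum.tsum_eq, div_mul_eq_mul_div]
  refine norm_tsum_le_of_geometric_bound (inv_nonneg.mpr hr0.le) (inv_lt_one_of_one_lt₀ hr1)
    fun j => (norm_dotProduct_adjugate_mulVec_toeplitz_sub_le hf hφ hψ hr₁ hr hrR hPφ hh ht
      N j).trans_eq ?_
  ring

variable {g : ℂ → ℂ}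

lemma expSymbol_smul (f g : ℂ → ℂ) (s : ℝ) :
    expSymbol (s • f) (s • g) = fun z => Complex.exp (s * (f z + g z⁻¹)) := by
  ext z
  simp only [expSymbol, Pi.smul_apply, Complex.real_smul, mul_add]

lemma norm_expSymbol_smul (hre : ∀ z, ‖z‖ = 1 → (f z + g z⁻¹).re = 0) (s : ℝ) (z : ℂ)
    (hz : ‖z‖ = 1) : ‖expSymbol (s • f) (s • g) z‖ = 1 := by
  rw [expSymbol_smul, Complex.norm_exp, Complex.re_ofReal_mul, hre z hz, mul_zero, Real.exp_zero]

lemma expSymbol_inv (φ ψ : ℂ → ℂ) (z : ℂ) : expSymbol φ ψ z⁻¹ = expSymbol ψ φ z := by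
  rw [expSymbol, expSymbol, inv_inv, add_comm]

lemma szegoExponent_comm (f g : ℂ → ℂ) : szegoExponent g f = szegoExponent f g :=
  tsum_congr fun k => by ring

lemma szegoExponent_smul (f g : ℂ → ℂ) (s : ℝ) :
    szegoExponent f (s • g) = s * szegoExponent f g := by
  rw [szegoExponent, szegoExponent, ← tsum_mul_left]
  refine tsum_congr fun k => ?_
  rw [taylorCoeff, taylorCoeff, taylorCoeff, iteratedDeriv_const_smul_field, Complex.real_smul]
  ring

lemma norm_exp_smul_le {B s : ℝ} (hs : |s| ≤ 1) (hB : ∀ z, ‖z‖ ≤ r → ‖f z‖ ≤ B) (z : ℂ)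
    (hz : ‖z‖ ≤ r) : ‖Complex.exp ((s • f) z)‖ ≤ Real.exp B := by
  refine (Complex.norm_exp_le_exp_norm _).trans (Real.exp_le_exp.mpr ?_)
  rw [Pi.smul_apply, norm_smul, Real.norm_eq_abs]
  exact (mul_le_of_le_one_left (norm_nonneg _) hs).trans (hB z hz)

lemma tendsto_mul_sq_add_one_mul_pow (C : ℝ) {σ : ℝ} (hσ0 : 0 ≤ σ) (hσ1 : σ < 1) :
    Tendsto (fun N : ℕ => C * ((N ^ 2 + 1) * σ ^ N)) atTop (nhds 0) := by
  have h := ((tendsto_pow_const_mul_const_pow_of_lt_one 2 hσ0 hσ1).add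
    (tendsto_pow_atTop_nhds_zero_of_lt_one hσ0 hσ1)).const_mul C
  simpa only [add_mul, one_mul, add_zero, mul_zero] using h

lemma exists_norm_trace_adjugate_analytic_sub_le (hf : DifferentiableOn ℂ f (ball 0 R))
    (hg : DifferentiableOn ℂ g (ball 0 R)) (hR : 1 < R) (hf0 : f 0 = 0)
    (hre : ∀ z, ‖z‖ = 1 → (f z + g z⁻¹).re = 0) :
    ∃ ε : ℕ → ℝ, Tendsto ε atTop (nhds 0) ∧ ∀ N : ℕ, ∀ s ∈ Set.Icc (0 : ℝ) 1,
      ‖((toeplitzMatrix (expSymbol (s • f) (s • g)) N).adjugate *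
          toeplitzMatrix (fun z => f z * expSymbol (s • f) (s • g) z) N).trace -
        s * szegoExponent f g * (toeplitzMatrix (expSymbol (s • f) (s • g)) N).det‖ ≤ ε N := by
  obtain ⟨r, hr1, hrR⟩ := exists_between hR
  obtain ⟨r₁, hr₁, hr⟩ := exists_between hr1
  obtain ⟨B₁, hB₁⟩ := exists_norm_le_of_continuousOn_ball hf.continuousOn hrR
  obtain ⟨B₂, hB₂⟩ := exists_norm_le_of_continuousOn_ball hg.continuousOn hrR
  have hfB (z : ℂ) (hz : ‖z‖ ≤ r) : ‖f z‖ ≤ max B₁ B₂ := (hB₁ z hz).trans (le_max_left _ _)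
  have hgB (z : ℂ) (hz : ‖z‖ ≤ r) : ‖g z‖ ≤ max B₁ B₂ := (hB₂ z hz).trans (le_max_right _ _)
  obtain ⟨C, hC⟩ := exists_norm_trace_adjugate_sub_le hf hf0 hr₁ hr hrR (Real.exp (max B₁ B₂))
  refine ⟨_, tendsto_mul_sq_add_one_mul_pow C (by positivity) (inv_lt_one_of_one_lt₀ hr₁),
    fun N s hs => ?_⟩
  have hs1 : |s| ≤ 1 := abs_le.mpr ⟨by linarith [hs.1], hs.2⟩
  have hs1' : |-s| ≤ 1 := by rwa [abs_neg]
  have h := hC (s • f) (s • g) (hf.const_smul s) (hg.const_smul s)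
    (by simpa only [neg_smul, Pi.neg_apply] using norm_exp_smul_le hs1' hfB)
    (norm_exp_smul_le hs1 hgB)
    (by simpa only [neg_smul, Pi.neg_apply] using norm_exp_smul_le hs1' hgB)
    (fun z hz => (norm_expSymbol_smul hre s z hz).le) N
  rwa [szegoExponent_smul, mul_comm (Matrix.det _)] at h

lemma toeplitzMatrix_expSymbol_swap (φ ψ : ℂ → ℂ) (N : ℕ) :
    toeplitzMatrix (expSymbol φ ψ) N = (toeplitzMatrix (expSymbol ψ φ) N)ᵀ := by
  rw [← toeplitzMatrix_comp_inv]
  simp only [expSymbol_inv]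

lemma trace_adjugate_mul_toeplitzMatrix_coanalytic (φ ψ g : ℂ → ℂ) (N : ℕ) :
    ((toeplitzMatrix (expSymbol φ ψ) N).adjugate *
      toeplitzMatrix (fun z => g z⁻¹ * expSymbol φ ψ z) N).trace =
    ((toeplitzMatrix (expSymbol ψ φ) N).adjugate *
      toeplitzMatrix (fun z => g z * expSymbol ψ φ z) N).trace := by
  have h := toeplitzMatrix_comp_inv (fun z => g z * expSymbol ψ φ z) N
  simp only [expSymbol_inv] at h
  rw [h, toeplitzMatrix_expSymbol_swap, ← adjugate_transpose, ← transpose_mul, trace_transpose,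
    trace_mul_comm]

/-- By Jacobi's formula the trace is the derivative in `s` of `D_N[exp (s f(z) + s g(1/z))]`. -/
lemma exists_norm_trace_adjugate_exponent_sub_le (hf : DifferentiableOn ℂ f (ball 0 R))
    (hg : DifferentiableOn ℂ g (ball 0 R)) (hR : 1 < R) (hf0 : f 0 = 0) (hg0 : g 0 = 0)
    (hre : ∀ z, ‖z‖ = 1 → (f z + g z⁻¹).re = 0) :
    ∃ ε : ℕ → ℝ, Tendsto ε atTop (nhds 0) ∧ ∀ N : ℕ, ∀ s ∈ Set.Icc (0 : ℝ) 1,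
      ‖((toeplitzMatrix (expSymbol (s • f) (s • g)) N).adjugate *
          toeplitzMatrix (fun z => (f z + g z⁻¹) * expSymbol (s • f) (s • g) z) N).trace -
        2 * s * szegoExponent f g * (toeplitzMatrix (expSymbol (s • f) (s • g)) N).det‖ ≤ ε N := by
  have hre' (z : ℂ) (hz : ‖z‖ = 1) : (g z + f z⁻¹).re = 0 := by
    have h := hre z⁻¹ (by rw [norm_inv, hz, inv_one])
    rwa [inv_inv, add_comm] at h
  obtain ⟨ε₁, hε₁, h₁⟩ := exists_norm_trace_adjugate_analytic_sub_le hf hg hR hf0 hre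
  obtain ⟨ε₂, hε₂, h₂⟩ := exists_norm_trace_adjugate_analytic_sub_le hg hf hR hg0 hre'
  refine ⟨fun N => ε₁ N + ε₂ N, by simpa using hε₁.add hε₂, fun N s hs => ?_⟩
  have hfc := continuousOn_sphere_of_differentiableOn_ball hf hR
  have hgc := continuousOn_sphere_of_differentiableOn_ball hg hR
  have ht := continuousOn_expSymbol (hfc.const_smul s) (hgc.const_smul s)
  have hadd : toeplitzMatrix (fun z => (f z + g z⁻¹) * expSymbol (s • f) (s • g) z) N =
      toeplitzMatrix (fun z => f z * expSymbol (s • f) (s • g) z) N +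
        toeplitzMatrix (fun z => g z⁻¹ * expSymbol (s • f) (s • g) z) N := by
    ext m n
    simp only [toeplitzMatrix, of_apply, Matrix.add_apply, add_mul]
    exact symbolCoeff_add (hfc.mul ht) ((continuousOn_comp_inv_sphere hgc).mul ht) _
  have h₂ := h₂ N s hs
  rw [← trace_adjugate_mul_toeplitzMatrix_coanalytic, toeplitzMatrix_expSymbol_swap (s • g),
    det_transpose, szegoExponent_comm] at h₂
  refine (le_of_eq ?_).trans (norm_add_le_of_le (h₁ N s hs) h₂)
  rw [hadd, mul_add, trace_add]
  congr 1
  ring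

end LogDerivative

section Szego

open Metric

lemma norm_mul_exp_neg_sub_le {D D' : ℝ → ℂ} {c : ℂ} {ε : ℝ} (hD : ∀ s, HasDerivAt D (D' s) s)
    (hε : ∀ s ∈ Set.Icc (0 : ℝ) 1, ‖D' s - 2 * s * c * D s‖ ≤ ε) :
    ‖D 1 * Complex.exp (-c) - D 0‖ ≤ ε * Real.exp ‖c‖ := by
  have hexp (s : ℝ) : HasDerivAt (fun s : ℝ => Complex.exp (-(c * (s : ℂ) ^ 2)))
      (Complex.exp (-(c * (s : ℂ) ^ 2)) * -(c * (2 * s))) s := by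
    simpa using (((Complex.ofRealCLM.hasDerivAt (x := s)).pow 2).const_mul c).neg.cexp
  have h := norm_image_sub_le_of_norm_deriv_le_segment_01' (C := ε * Real.exp ‖c‖)
    (fun s _ => ((hD s).mul (hexp s)).hasDerivWithinAt) fun s hs => by
      have hs' : s ∈ Set.Icc (0 : ℝ) 1 := ⟨hs.1, hs.2.le⟩
      rw [show D' s * Complex.exp (-(c * (s : ℂ) ^ 2)) +
          D s * (Complex.exp (-(c * (s : ℂ) ^ 2)) * -(c * (2 * s))) =
          (D' s - 2 * s * c * D s) * Complex.exp (-(c * (s : ℂ) ^ 2)) by ring, norm_mul]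
      refine mul_le_mul (hε s hs') ?_ (norm_nonneg _) ((norm_nonneg _).trans (hε s hs'))
      refine (Complex.norm_exp_le_exp_norm _).trans (Real.exp_le_exp.mpr ?_)
      rw [norm_neg, norm_mul, norm_pow, Complex.norm_real, Real.norm_eq_abs, abs_of_nonneg hs.1]
      exact mul_le_of_le_one_right (norm_nonneg _) (pow_le_one₀ hs.1 hs.2.le)
  simpa using h

lemma toeplitzDet_one (N : ℕ) : toeplitzDet (fun _ => 1) N = 1 := by
  rw [toeplitzDet]
  convert Matrix.det_one (R := ℂ) (n := Fin N)
  ext m n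
  rw [Matrix.of_apply, symbolCoeff_one, Matrix.one_apply]
  exact if_congr (by rw [sub_eq_zero, Nat.cast_inj, Fin.val_inj]) rfl rfl

variable {f g : ℂ → ℂ} {R : ℝ}

lemma hasDerivAt_toeplitzDet_expSymbol (hf : ContinuousOn f (sphere 0 1))
    (hg : ContinuousOn g (sphere 0 1)) (N : ℕ) (s : ℝ) :
    HasDerivAt (fun s : ℝ => toeplitzDet (expSymbol (s • f) (s • g)) N)
      ((toeplitzMatrix (expSymbol (s • f) (s • g)) N).adjugate *
        toeplitzMatrix (fun z => (f z + g z⁻¹) * expSymbol (s • f) (s • g) z) N).trace s := by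
  simp only [expSymbol_smul]
  exact hasDerivAt_det fun m n =>
    hasDerivAt_symbolCoeff_exp (hf.add (continuousOn_comp_inv_sphere hg)) _ s

lemma expSymbol_zero : expSymbol 0 0 = fun _ => 1 := by
  ext z
  simp [expSymbol]

theorem tendsto_toeplitzDet_expSymbol (hf : DifferentiableOn ℂ f (ball 0 R))
    (hg : DifferentiableOn ℂ g (ball 0 R)) (hR : 1 < R) (hf0 : f 0 = 0) (hg0 : g 0 = 0)
    (hre : ∀ z, ‖z‖ = 1 → (f z + g z⁻¹).re = 0) :
    Tendsto (toeplitzDet (expSymbol f g)) atTop (nhds (Complex.exp (szegoExponent f g))) := by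
  obtain ⟨ε, hε, hbound⟩ := exists_norm_trace_adjugate_exponent_sub_le hf hg hR hf0 hg0 hre
  set c := szegoExponent f g
  have hmain (N : ℕ) :
      ‖toeplitzDet (expSymbol f g) N * Complex.exp (-c) - 1‖ ≤ ε N * Real.exp ‖c‖ := by
    have h := norm_mul_exp_neg_sub_le (fun s => hasDerivAt_toeplitzDet_expSymbol
      (continuousOn_sphere_of_differentiableOn_ball hf hR)
      (continuousOn_sphere_of_differentiableOn_ball hg hR) N s) (hbound N)
    simpa [expSymbol_zero, toeplitzDet_one] using h
  have hlim : Tendsto (fun N => toeplitzDet (expSymbol f g) N * Complex.exp (-c)) atTop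
      (nhds 1) :=
    tendsto_iff_norm_sub_tendsto_zero.mpr <| squeeze_zero (fun _ => norm_nonneg _) hmain
      (by simpa using hε.mul_const (Real.exp ‖c‖))
  simpa [mul_assoc, ← Complex.exp_add] using hlim.mul_const (Complex.exp c)

end Szego

section LogSum

open ComplexConjugate Metric

lemma one_sub_mem_slitPlane {x : ℂ} (hx : ‖x‖ < 1) : 1 - x ∈ Complex.slitPlane := by
  rw [sub_eq_add_neg]
  exact Complex.mem_slitPlane_of_norm_lt_one (by rwa [norm_neg])

lemma log_one_sub_conj {x : ℂ} (hx : ‖x‖ < 1) :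
    Complex.log (1 - conj x) = conj (Complex.log (1 - x)) := by
  rw [← Complex.log_conj _ (Complex.slitPlane_arg_ne_pi (one_sub_mem_slitPlane hx)), map_sub,
    map_one]

variable {ι : Type*}

lemma norm_mul_conj_lt_one {b : ι → ℂ} (hb : ∀ i, ‖b i‖ < 1) (i l : ι) :
    ‖b i * conj (b l)‖ < 1 := by
  rw [norm_mul, RCLike.norm_conj]
  exact mul_lt_one_of_nonneg_of_lt_one_left (norm_nonneg _) (hb i) (hb l).le

lemma exists_radius_mul_norm_lt_one [Finite ι] {b : ι → ℂ} (hb : ∀ i, ‖b i‖ < 1) :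
    ∃ R : ℝ, 1 < R ∧ ∀ i, ∀ x ∈ ball (0 : ℂ) R, ‖b i * x‖ < 1 := by
  have h (i : ι) : ∀ᶠ R in nhdsWithin (1 : ℝ) (Set.Ioi 1), ‖b i‖ * R < 1 := by
    have hc : ContinuousWithinAt (fun R : ℝ => ‖b i‖ * R) (Set.Ioi 1) 1 := by fun_prop
    exact hc.eventually_lt continuousWithinAt_const (by simpa using hb i)
  obtain ⟨R, hR, hR1⟩ := ((eventually_all.mpr h).and self_mem_nhdsWithin).exists
  refine ⟨R, hR1, fun i x hx => ?_⟩
  rw [norm_mul]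
  exact (mul_le_mul_of_nonneg_left (mem_ball_zero_iff.mp hx).le (norm_nonneg _)).trans_lt (hR i)

variable [Fintype ι]

/-- The logarithm `∑ e_i log (1 - b_i x)` of the product of the factors `(1 - b_i x) ^ e_i`. -/
noncomputable def logSum (e b : ι → ℂ) (x : ℂ) : ℂ :=
  ∑ i, e i * Complex.log (1 - b i * x)

/-- The symbol equal to `∏ ((1 - b_i / z) ^ e_i / conj ((1 - b_i / z) ^ e_i))` on the unit circle,
given by its Wiener–Hopf factorization. For integers `e_i` it is, up to a power of `z`, a quotient
of Blaschke products. -/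
noncomputable def blaschkeSymbol (e b : ι → ℂ) : ℂ → ℂ :=
  expSymbol (logSum (fun i => -conj (e i)) fun i => conj (b i)) (logSum e b)

/-- The Hermitian form `∑ e_i conj(e_l) log (1 - b_i conj(b_l))`, which is Szegő's exponent of
`blaschkeSymbol e b`. -/
noncomputable def logPairing (e b : ι → ℂ) : ℂ :=
  ∑ i, ∑ l, e i * conj (e l) * Complex.log (1 - b i * conj (b l))

lemma logSum_zero (e b : ι → ℂ) : logSum e b 0 = 0 := by
  simp [logSum]

variable (e : ι → ℂ) {b : ι → ℂ}

lemma differentiableOn_logSum {R : ℝ} (hR : ∀ i, ∀ x ∈ ball (0 : ℂ) R, ‖b i * x‖ < 1) :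
    DifferentiableOn ℂ (logSum e b) (ball 0 R) :=
  DifferentiableOn.fun_sum fun i _ => DifferentiableOn.const_mul
    (DifferentiableOn.clog (by fun_prop) fun x hx => one_sub_mem_slitPlane (hR i x hx)) _

lemma taylorCoeff_logSum (hb : ∀ i, ‖b i‖ < 1) (n : ℕ) :
    taylorCoeff (logSum e b) n = -∑ i, e i * (b i ^ n / n) := by
  obtain ⟨R, hR1, hR⟩ := exists_radius_mul_norm_lt_one hb
  have hsum (z : ℂ) (hz : ‖z‖ = 1) :
      HasSum (fun n : ℕ => -(∑ i, e i * (b i ^ n / n)) * z ^ n) (logSum e b z) := by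
    have hbz (i : ι) : ‖b i * z‖ < 1 := hR i z (by rwa [mem_ball_zero_iff, hz])
    have h := (hasSum_sum fun i (_ : i ∈ Finset.univ) =>
      (Complex.hasSum_taylorSeries_neg_log (hbz i)).mul_left (e i)).neg
    convert! h using 1
    · ext n
      rw [neg_mul, Finset.sum_mul]
      exact congrArg _ (Finset.sum_congr rfl fun i _ => by rw [mul_pow]; ring)
    · simp only [logSum, mul_neg, Finset.sum_neg_distrib, neg_neg]
  refine taylorCoeff_eq_of_hasSum (differentiableOn_logSum e hR) hR1 hsum n

lemma logSum_neg_conj (hb : ∀ i, ‖b i‖ < 1) {z : ℂ} (hz : ‖z‖ = 1) :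
    logSum (fun i => -conj (e i)) (fun i => conj (b i)) z = -conj (logSum e b z⁻¹) := by
  have hlog (i : ι) :
      Complex.log (1 - conj (b i) * z) = conj (Complex.log (1 - b i * z⁻¹)) := by
    rw [← log_one_sub_conj (by rw [norm_mul, norm_inv, hz, inv_one, mul_one]; exact hb i),
      map_mul, Complex.inv_eq_conj hz, Complex.conj_conj]
  simp [logSum, hlog, map_sum]

lemma szegoExponent_logSum (hb : ∀ i, ‖b i‖ < 1) :
    szegoExponent (logSum (fun i => -conj (e i)) fun i => conj (b i)) (logSum e b) =
      logPairing e b := by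
  have hcb (i : ι) : ‖conj (b i)‖ < 1 := by rw [RCLike.norm_conj]; exact hb i
  have hterm (k : ℕ) : taylorCoeff (logSum (fun i => -conj (e i)) fun i => conj (b i)) (k + 1) *
      ((k + 1) * taylorCoeff (logSum e b) (k + 1)) =
      -∑ i, ∑ l, e i * conj (e l) * ((b i * conj (b l)) ^ (k + 1) / (k + 1)) := by
    have hk : (k + 1 : ℂ) ≠ 0 := by exact_mod_cast k.succ_ne_zero
    rw [taylorCoeff_logSum _ hcb, taylorCoeff_logSum _ hb, mul_comm, mul_neg, mul_neg, neg_mul,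
      neg_neg, mul_assoc, Finset.sum_mul_sum, Finset.mul_sum, ← Finset.sum_neg_distrib]
    refine Finset.sum_congr rfl fun i _ => ?_
    rw [Finset.mul_sum, ← Finset.sum_neg_distrib]
    refine Finset.sum_congr rfl fun l _ => ?_
    push_cast
    rw [mul_pow]
    field_simp
  have h : HasSum _ (-∑ i, ∑ l, e i * conj (e l) * -Complex.log (1 - b i * conj (b l))) :=
    (hasSum_sum fun i _ => hasSum_sum fun l _ => (Complex.hasSum_taylorSeries_neg_log'
      (norm_mul_conj_lt_one hb i l)).mul_left (e i * conj (e l))).neg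
  rw [szegoExponent, tsum_congr hterm, h.tsum_eq]
  simp only [logPairing, mul_neg, Finset.sum_neg_distrib, neg_neg]

theorem tendsto_toeplitzDet_blaschkeSymbol (hb : ∀ i, ‖b i‖ < 1) :
    Tendsto (toeplitzDet (blaschkeSymbol e b)) atTop
      (nhds (Complex.exp (logPairing e b))) := by
  obtain ⟨R, hR1, hR⟩ := exists_radius_mul_norm_lt_one hb
  have hR' (i : ι) (x : ℂ) (hx : x ∈ ball (0 : ℂ) R) : ‖conj (b i) * x‖ < 1 := by
    rw [norm_mul, RCLike.norm_conj, ← norm_mul]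
    exact hR i x hx
  rw [← szegoExponent_logSum e hb]
  refine tendsto_toeplitzDet_expSymbol (differentiableOn_logSum _ hR')
    (differentiableOn_logSum e hR) hR1 (logSum_zero _ _) (logSum_zero _ _) fun z hz => ?_
  rw [logSum_neg_conj e hb hz]
  simp

lemma conj_logPairing (hb : ∀ i, ‖b i‖ < 1) : conj (logPairing e b) = logPairing e b := by
  simp only [logPairing, map_sum, map_mul, Complex.conj_conj]
  rw [Finset.sum_comm]
  refine Finset.sum_congr rfl fun i _ => Finset.sum_congr rfl fun l _ => ?_
  rw [← log_one_sub_conj (norm_mul_conj_lt_one hb l i), map_mul, Complex.conj_conj,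
    mul_comm (e i), mul_comm (b i)]

lemma logPairing_smul (c : ℝ) (e b : ι → ℂ) : logPairing (c • e) b = c ^ 2 * logPairing e b := by
  simp only [logPairing, Pi.smul_apply, Complex.real_smul, map_mul, Complex.conj_ofReal,
    Finset.mul_sum]
  exact Finset.sum_congr rfl fun i _ => Finset.sum_congr rfl fun l _ => by ring

lemma exp_logPairing_intCast (e : ι → ℤ) (hb : ∀ i, ‖b i‖ < 1) :
    Complex.exp (logPairing (fun i => e i) b) =
      ∏ i, ∏ l, (1 - b i * conj (b l)) ^ (e i * e l) := by
  simp only [logPairing, Complex.exp_sum, map_intCast]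
  refine Finset.prod_congr rfl fun i _ => Finset.prod_congr rfl fun l _ => ?_
  rw [← Int.cast_mul, Complex.exp_int_mul, Complex.exp_log
    (Complex.slitPlane_ne_zero (one_sub_mem_slitPlane (norm_mul_conj_lt_one hb i l)))]

end LogSum

section AIII

open ComplexConjugate

variable {ι κ : Type*} (z : ι → ℂ) (Z : κ → ℂ)

/-- The zeros `b_i` of the AIII symbol as a `blaschkeSymbol`: the zeros `z` inside the unit circle
and the reflections `1 / conj Z` of the zeros outside. -/
noncomputable def innerZero : ι ⊕ κ → ℂ :=
  Sum.elim z fun k => conj (Z k)⁻¹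

/-- Twice the exponent of `innerZero` in the AIII symbol: `1` for a zero inside the unit circle and
`-1` for a reflected one. -/
def zeroSign : ι ⊕ κ → ℤ :=
  Sum.elim 1 (-1)

variable {z Z} in
lemma norm_innerZero_lt_one (hz : ∀ j, ‖z j‖ < 1) (hZ : ∀ k, 1 < ‖Z k‖) (i : ι ⊕ κ) :
    ‖innerZero z Z i‖ < 1 := by
  rcases i with j | k
  · exact hz j
  · rw [innerZero, Sum.elim_inr, RCLike.norm_conj, norm_inv]
    exact inv_lt_one_of_one_lt₀ (hZ k)

lemma prod_prod_norm_one_sub_div_sq [Fintype ι] [Fintype κ] :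
    ∏ j, ∏ k, ((‖1 - z j / Z k‖ ^ 2 : ℝ) : ℂ) =
      (∏ j, ∏ k, (1 - z j * (Z k)⁻¹)) * ∏ j, ∏ k, (1 - conj (Z k)⁻¹ * conj (z j)) := by
  simp only [← Finset.prod_mul_distrib]
  refine Finset.prod_congr rfl fun j _ => Finset.prod_congr rfl fun k _ => ?_
  rw [Complex.ofReal_pow, ← Complex.mul_conj', div_eq_mul_inv, map_sub, map_one, map_mul,
    mul_comm (conj (z j))]

lemma prod_innerZero_zpow_zeroSign [Fintype ι] [Fintype κ] :
    ∏ i, ∏ l, (1 - innerZero z Z i * conj (innerZero z Z l)) ^ (zeroSign i * zeroSign l) =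
      ((∏ j1, ∏ j2, (1 - z j1 * conj (z j2))) *
        ∏ k1, ∏ k2, (1 - (Z k1 * conj (Z k2))⁻¹)) /
      ∏ j, ∏ k, ((‖1 - z j / Z k‖ ^ 2 : ℝ) : ℂ) := by
  have hZZ : ∏ k1, ∏ k2, (1 - (Z k1 * conj (Z k2))⁻¹) =
      ∏ k1, ∏ k2, (1 - conj (Z k1)⁻¹ * (Z k2)⁻¹) := by
    rw [Finset.prod_comm]
    simp only [map_inv₀, mul_inv, mul_comm]
  rw [prod_prod_norm_one_sub_div_sq, hZZ]
  simp only [Fintype.prod_sum_type, innerZero, zeroSign, Sum.elim_inl, Sum.elim_inr, Pi.one_apply,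
    Pi.neg_apply, Complex.conj_conj, mul_one, mul_neg, zpow_one, zpow_neg,
    Finset.prod_mul_distrib, Finset.prod_inv_distrib]
  rw [Finset.prod_comm (s := (Finset.univ : Finset κ)) (t := (Finset.univ : Finset ι)),
    div_eq_mul_inv]
  simp only [mul_inv, inv_inv]
  ring

lemma exp_aiiiW {Nz NZ : ℕ} (z : Fin Nz → ℂ) (Z : Fin NZ → ℂ) :
    (fun w => Complex.exp (aiiiW Nz NZ z Z w)) =
      blaschkeSymbol ((1 / 2 : ℝ) • fun i => (zeroSign i : ℂ)) (innerZero z Z) := by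
  ext w
  simp only [blaschkeSymbol, expSymbol, aiiiW, logSum, Fintype.sum_sum_type, innerZero, zeroSign,
    Sum.elim_inl, Sum.elim_inr, Pi.smul_apply, Pi.one_apply, Pi.neg_apply, Complex.conj_conj,
    Finset.sum_sub_distrib, div_eq_mul_inv, mul_inv, map_inv₀, one_mul, mul_comm w,
    Complex.real_smul, map_mul, map_intCast, Complex.conj_ofReal, Int.cast_neg, Int.cast_one,
    neg_mul, mul_neg, mul_one, Finset.sum_neg_distrib, ← Finset.mul_sum]
  congr 1
  push_cast
  ring

end AIII

/-- Theorem 3, `α = ω` part: value of the string order parameter in class AIII.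
The limit of `|D_N[e^W]|` exists and equals `L^{1/4}`, where `L` is the stated positive
real product over the zeros. -/
theorem aiii_string_order_parameter
    (Nz NZ : ℕ) (z : Fin Nz → ℂ) (Z : Fin NZ → ℂ)
    (hz : ∀ j, ‖z j‖ < 1) (hZ : ∀ k, 1 < ‖Z k‖) :
    ∃ r : ℝ, 0 < r ∧
      ((∏ j1 : Fin Nz, ∏ j2 : Fin Nz, (1 - z j1 * (starRingEnd ℂ) (z j2))) *
       (∏ k1 : Fin NZ, ∏ k2 : Fin NZ, (1 - (Z k1 * (starRingEnd ℂ) (Z k2))⁻¹))) /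
      (∏ j : Fin Nz, ∏ k : Fin NZ, ((‖1 - z j / Z k‖ ^ 2 : ℝ) : ℂ)) = (r : ℂ) ∧
      Tendsto
        (fun N : ℕ => ‖toeplitzDet (fun w => Complex.exp (aiiiW Nz NZ z Z w)) N‖)
        atTop (nhds (r ^ ((1 : ℝ) / 4))) := by
  have hb := norm_innerZero_lt_one hz hZ
  obtain ⟨S, hS⟩ := Complex.conj_eq_iff_real.mp (conj_logPairing (fun i => (zeroSign i : ℂ)) hb)
  refine ⟨Real.exp S, Real.exp_pos S, ?_, ?_⟩
  · rw [← prod_innerZero_zpow_zeroSign, ← exp_logPairing_intCast _ hb, hS, Complex.ofReal_exp]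
  · have hlim :=
      (tendsto_toeplitzDet_blaschkeSymbol ((1 / 2 : ℝ) • fun i => (zeroSign i : ℂ)) hb).norm
    rw [logPairing_smul, hS, ← Complex.ofReal_pow, ← Complex.ofReal_mul, ← Complex.ofReal_exp,
      Complex.norm_real, Real.norm_of_nonneg (Real.exp_pos _).le] at hlim
    rw [exp_aiiiW, ← Real.exp_mul, mul_comm S]
    convert hlim using 4
    norm_num
end

section
/- Closed formula for the emptiness formation probability (Example for f(z) = z^{-2}(z−a)²(z−b)²). Let a, b ∈ ℝ with 0 < |a| < 1 < |b| and a·b ≠ 1, and let t be the symbol t(z) = ((b^{-1} − a)/2) · (z + 1)(z − 1) / ( (1 − a z)(z − b^{-1}) ) on the unit circle. Then for every integer N ≥ 1, D_N[t] = ( (b^{-1} − a)/2 )^N · ( (1−a)(1+b)/(2(b−a)) + (−1)^N (1+a)(1−b)/(2(a−b)) ). (The emptiness formation probability of the corresponding BDI chain is P(N) = |D_N[t]|.) -/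
open scoped BigOperators
open Filter

/-!
On the unit circle the symbol is a constant multiple of
`(w - w⁻¹) / ((1 - a w) (1 - c w⁻¹))` with `c = b⁻¹`. Both factors of the denominator expand in
geometric series, so the Fourier coefficients `g k` are geometric with ratio `a` on `k ≥ 1` and with
ratio `c` on `k ≤ -1`. Subtracting `a` times the previous row and then `c` times the previous column
amounts to multiplying the symbol by `(1 - a w) (1 - c w⁻¹)`: the Toeplitz matrix turns into that of
`w - w⁻¹`, except that the corner entry remains `g 0 = (c - a) / (1 - a c)`. The determinant of this
tridiagonal matrix depends only on the parity of `N`, which produces the term `(-1) ^ N`.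
-/

section Determinants

/-- The `n × n` Toeplitz matrix with entries `g (i - j)`. -/
def toeplitz {α : Type*} (g : ℤ → α) (n : ℕ) : Matrix (Fin n) (Fin n) α :=
  Matrix.of fun i j => g ((i : ℤ) - (j : ℤ))

/-- The `n × n` tridiagonal matrix with diagonal `d`, superdiagonal `u` and subdiagonal `l`. The
off-diagonal sequences are indexed by the smaller of the row and column indices. -/
def tridiagonal {α : Type*} [Zero α] (d u l : ℕ → α) (n : ℕ) : Matrix (Fin n) (Fin n) α :=
  Matrix.of fun i j =>
    if (j : ℕ) = i + 1 then u i else if (i : ℕ) = j + 1 then l j else if (i : ℕ) = j then d i else 0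

variable {R : Type*} [CommRing R]

theorem det_eq_mul_of_last_column {n : ℕ} (A : Matrix (Fin (n + 1)) (Fin (n + 1)) R)
    (h : ∀ i : Fin n, A i.castSucc (Fin.last n) = 0) :
    A.det = A (Fin.last n) (Fin.last n) * (A.submatrix Fin.castSucc Fin.castSucc).det := by
  have hsign : (-1 : R) ^ (n + n) = 1 := Even.neg_one_pow ⟨n, rfl⟩
  rw [Matrix.det_succ_column _ (Fin.last n), Fin.sum_univ_castSucc,
    Finset.sum_eq_zero fun i _ => by rw [h, mul_zero, zero_mul], Fin.val_last, hsign,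
    Fin.succAbove_last]
  ring

theorem det_tridiagonal_submatrix_succAbove (d u l : ℕ → R) (n : ℕ) :
    ((tridiagonal d u l (n + 2)).submatrix Fin.castSucc (Fin.last n).castSucc.succAbove).det =
      u n * (tridiagonal d u l n).det := by
  have hcol (j : Fin n) : (Fin.last n).castSucc.succAbove j.castSucc = j.castSucc.castSucc :=
    Fin.succAbove_of_castSucc_lt _ _ (by simp [Fin.lt_def])
  have hcol_last : (Fin.last n).castSucc.succAbove (Fin.last n) = Fin.last (n + 1) :=
    Fin.succAbove_of_le_castSucc _ _ le_rfl
  rw [det_eq_mul_of_last_column]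
  · congr 2
    · simp [tridiagonal, hcol_last]
    · ext i j
      simp [tridiagonal, hcol]
  · intro i
    have := i.isLt
    simp only [tridiagonal, Matrix.submatrix_apply, Matrix.of_apply, hcol_last,
      Fin.val_castSucc, Fin.val_last]
    grind

theorem det_tridiagonal_add_two (d u l : ℕ → R) (n : ℕ) :
    (tridiagonal d u l (n + 2)).det =
      d (n + 1) * (tridiagonal d u l (n + 1)).det - l n * u n * (tridiagonal d u l n).det := by
  have hzero (j : Fin n) :
      tridiagonal d u l (n + 2) (Fin.last (n + 1)) j.castSucc.castSucc = 0 := by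
    have := j.isLt
    simp only [tridiagonal, Matrix.of_apply, Fin.val_castSucc, Fin.val_last]
    grind
  have hsub : tridiagonal d u l (n + 2) (Fin.last (n + 1)) (Fin.last n).castSucc = l n := by
    simp [tridiagonal, show n ≠ n + 1 + 1 by lia]
  have hdiag : tridiagonal d u l (n + 2) (Fin.last (n + 1)) (Fin.last (n + 1)) = d (n + 1) := by
    simp [tridiagonal]
  have hlead : (tridiagonal d u l (n + 2)).submatrix Fin.castSucc Fin.castSucc =
      tridiagonal d u l (n + 1) := rfl
  have hsign_sub : (-1 : R) ^ (n + 1 + n) = -1 := Odd.neg_one_pow ⟨n, by ring⟩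
  have hsign_diag : (-1 : R) ^ (n + 1 + (n + 1)) = 1 := Even.neg_one_pow ⟨n + 1, rfl⟩
  rw [Matrix.det_succ_row _ (Fin.last (n + 1)), Fin.sum_univ_castSucc, Fin.sum_univ_castSucc,
    Finset.sum_eq_zero fun j _ => by rw [hzero, mul_zero, zero_mul], Fin.succAbove_last,
    det_tridiagonal_submatrix_succAbove, hsub, hdiag, hlead, Fin.val_last, Fin.val_castSucc,
    Fin.val_last, hsign_sub, hsign_diag]
  ring

theorem two_mul_det_tridiagonal_corner (d : R) (n : ℕ) :
    2 * (tridiagonal (Pi.single 0 d) (fun _ => -1) (fun _ => 1) n).det =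
      1 + d + (-1) ^ n * (1 - d) := by
  induction n using Nat.twoStepInduction with
  | zero =>
    rw [Matrix.det_fin_zero]
    ring
  | one =>
    rw [Matrix.det_fin_one]
    simp [tridiagonal]
    ring
  | more n ih _ =>
    rw [det_tridiagonal_add_two, Pi.single_eq_of_ne n.succ_ne_zero]
    linear_combination ih

theorem det_eq_of_bidiagonal_reduction {n : ℕ} {A B : Matrix (Fin (n + 1)) (Fin (n + 1)) R}
    (a c : R) (corner : A 0 0 = B 0 0)
    (column : ∀ i : Fin n, A i.succ 0 = B i.succ 0 + a * A i.castSucc 0)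
    (row : ∀ j : Fin n, A 0 j.succ = B 0 j.succ + c * A 0 j.castSucc)
    (interior : ∀ i j : Fin n, A i.succ j.succ - a * A i.castSucc j.succ =
      B i.succ j.succ + c * (A i.succ j.castSucc - a * A i.castSucc j.castSucc)) :
    A.det = B.det := by
  let C : Matrix (Fin (n + 1)) (Fin (n + 1)) R :=
    Matrix.of fun i j => Fin.cases (A 0 j) (fun k => A k.succ j - a * A k.castSucc j) i
  trans C.det
  · exact Matrix.det_eq_of_forall_row_eq_smul_add_pred (fun _ => a) (fun j => by simp [C])
      fun i j => by simp [C]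
  · refine Matrix.det_eq_of_forall_col_eq_smul_add_pred (fun _ => c) (fun i => ?_) fun i j => ?_
    · cases i using Fin.cases with
      | zero => simpa [C] using corner
      | succ i => simpa [C, sub_eq_iff_eq_add] using column i
    · cases i using Fin.cases with
      | zero => simpa [C] using row j
      | succ i => simpa [C] using interior i j

section Recurrence

variable {a c l u : R} {g : ℤ → R}

theorem second_difference_of_recurrence (hzero : (1 - a * c) * g 0 = c * l + a * u)
    (hpos : ∀ k : ℕ, g (k + 1) = a * g k + if k = 0 then l else 0)
    (hneg : ∀ k : ℕ, g (-(k + 1)) = c * g (-k) + if k = 0 then u else 0) (k : ℤ) :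
    g k - a * g (k - 1) =
      (if k = -1 then u else if k = 1 then l else 0) + c * (g (k + 1) - a * g k) := by
  rcases lt_trichotomy k 0 with hk | rfl | hk
  · obtain ⟨n, rfl⟩ : ∃ n : ℕ, k = -(n + 1) := ⟨(-k - 1).toNat, by lia⟩
    have h₁ := hneg n
    have h₂ := hneg (n + 1)
    rw [if_neg n.succ_ne_zero] at h₂
    rw [if_neg (by lia : -((n : ℤ) + 1) ≠ 1), show -((n : ℤ) + 1) + 1 = -n by ring,
      show -((n : ℤ) + 1) - 1 = -(n + 1 + 1) by ring,
      if_congr (by lia : -((n : ℤ) + 1) = -1 ↔ n = 0) rfl rfl]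
    push_cast at h₂
    linear_combination h₁ - a * h₂
  · have h₁ := hpos 0
    have h₂ := hneg 0
    simp only [Nat.cast_zero, neg_zero, zero_add, if_true] at h₁ h₂
    simp only [zero_add, zero_sub, h₁, h₂]
    norm_num
    linear_combination hzero
  · obtain ⟨n, rfl⟩ : ∃ n : ℕ, k = n + 1 := ⟨(k - 1).toNat, by lia⟩
    have h₁ := hpos n
    have h₂ := hpos (n + 1)
    rw [if_neg n.succ_ne_zero] at h₂
    rw [if_neg (by lia : (n : ℤ) + 1 ≠ -1), if_congr (by lia : (n : ℤ) + 1 = 1 ↔ n = 0) rfl rfl,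
      add_sub_cancel_right]
    push_cast at h₂
    linear_combination h₁ - c * h₂

theorem det_toeplitz_eq_det_tridiagonal (hzero : (1 - a * c) * g 0 = c * l + a * u)
    (hpos : ∀ k : ℕ, g (k + 1) = a * g k + if k = 0 then l else 0)
    (hneg : ∀ k : ℕ, g (-(k + 1)) = c * g (-k) + if k = 0 then u else 0) (n : ℕ) :
    (toeplitz g n).det = (tridiagonal (Pi.single 0 (g 0)) (fun _ => u) (fun _ => l) n).det := by
  cases n with
  | zero => rw [Matrix.det_fin_zero, Matrix.det_fin_zero]
  | succ n =>
    refine det_eq_of_bidiagonal_reduction a c ?_ (fun i => ?_) (fun j => ?_) fun i j => ?_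
    · simp [toeplitz, tridiagonal]
    · have h := hpos i
      simpa [toeplitz, tridiagonal, add_comm] using h
    · have h := hneg j
      simpa [toeplitz, tridiagonal, add_comm] using h
    · have h := second_difference_of_recurrence hzero hpos hneg ((i : ℤ) - j)
      rw [if_congr (by omega : (i : ℤ) - j = -1 ↔ (j : ℕ) = i + 1) rfl rfl,
        if_congr (by omega : (i : ℤ) - j = 1 ↔ (i : ℕ) = j + 1) rfl rfl] at h
      have hrow : (i : ℤ) - (j + 1) = i - j - 1 := by ring
      have hcol : (i : ℤ) + 1 - j = i - j + 1 := by ring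
      simpa [toeplitz, tridiagonal, hrow, hcol] using h

end Recurrence

end Determinants

section Coefficients

/-- The two-sided geometric sequence: `a ^ k` for `k ≥ 0` and `c ^ (-k)` for `k ≤ 0`. -/
def twoSidedGeom {M : Type*} [CommMonoid M] (a c : M) (k : ℤ) : M :=
  a ^ k.toNat * c ^ (-k).toNat

theorem twoSidedGeom_natCast {M : Type*} [CommMonoid M] (a c : M) (n : ℕ) :
    twoSidedGeom a c n = a ^ n := by
  simp [twoSidedGeom]

theorem twoSidedGeom_neg {M : Type*} [CommMonoid M] (a c : M) (k : ℤ) :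
    twoSidedGeom a c (-k) = twoSidedGeom c a k := by
  rw [twoSidedGeom, twoSidedGeom, neg_neg, mul_comm]

variable {F : Type*} [Field F]

/-- The Fourier coefficients of the BDI symbol `(w + 1) (w - 1) / ((1 - a w) (w - c))`, written as
`(w - w⁻¹) / ((1 - a w) (1 - c w⁻¹))` with the two-sided geometric series for the denominator. -/
def bdiCoeff (a c : F) (k : ℤ) : F :=
  (1 - a * c)⁻¹ * (twoSidedGeom a c (k - 1) - twoSidedGeom a c (k + 1))

theorem bdiCoeff_zero (a c : F) : bdiCoeff a c 0 = (c - a) / (1 - a * c) := by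
  have hone (x y : F) : twoSidedGeom x y 1 = x := (twoSidedGeom_natCast x y 1).trans (pow_one x)
  rw [bdiCoeff, zero_sub, zero_add, twoSidedGeom_neg, hone, hone, div_eq_inv_mul]

theorem bdiCoeff_neg (a c : F) (k : ℤ) : bdiCoeff a c (-k) = -bdiCoeff c a k := by
  have hsub : -k - 1 = -(k + 1) := by ring
  have hadd : -k + 1 = -(k - 1) := by ring
  rw [bdiCoeff, bdiCoeff, hsub, hadd, twoSidedGeom_neg, twoSidedGeom_neg, mul_comm a c]
  ring

variable {a c : F}

theorem bdiCoeff_natCast_succ (hac : 1 - a * c ≠ 0) (k : ℕ) :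
    bdiCoeff a c (k + 1) = a * bdiCoeff a c k + if k = 0 then 1 else 0 := by
  have hgeom (n : ℕ) : twoSidedGeom a c n = a ^ n := twoSidedGeom_natCast a c n
  cases k with
  | zero =>
    have h₀ : twoSidedGeom a c 0 = 1 := (hgeom 0).trans (pow_zero a)
    have h₂ : twoSidedGeom a c (1 + 1) = a ^ 2 := hgeom 2
    rw [Nat.cast_zero, bdiCoeff_zero, bdiCoeff, zero_add, sub_self, h₀, h₂, if_pos rfl]
    linear_combination inv_mul_cancel₀ hac
  | succ k =>
    have hprev : ((k + 1 : ℕ) : ℤ) - 1 = k := by lia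
    have hprev' : ((k + 1 : ℕ) : ℤ) + 1 - 1 = (k + 1 : ℕ) := by lia
    have hnext : ((k + 1 : ℕ) : ℤ) + 1 = (k + 2 : ℕ) := by lia
    have hnext' : ((k + 1 : ℕ) : ℤ) + 1 + 1 = (k + 3 : ℕ) := by lia
    rw [bdiCoeff, bdiCoeff, hprev', hprev, hnext', hnext, hgeom, hgeom, hgeom, hgeom,
      if_neg k.succ_ne_zero]
    ring

theorem bdiCoeff_neg_natCast_succ (hac : 1 - a * c ≠ 0) (k : ℕ) :
    bdiCoeff a c (-(k + 1)) = c * bdiCoeff a c (-k) + if k = 0 then -1 else 0 := by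
  rw [bdiCoeff_neg, bdiCoeff_neg, bdiCoeff_natCast_succ (by rwa [mul_comm])]
  split_ifs <;> ring

theorem two_mul_det_toeplitz_bdiCoeff (hac : 1 - a * c ≠ 0) (n : ℕ) :
    2 * (toeplitz (bdiCoeff a c) n).det =
      ((1 - a) * (1 + c) + (-1) ^ n * ((1 + a) * (1 - c))) / (1 - a * c) := by
  have hzero : (1 - a * c) * bdiCoeff a c 0 = c * 1 + a * (-1) := by
    rw [bdiCoeff_zero]
    field_simp
    ring
  rw [det_toeplitz_eq_det_tridiagonal hzero (bdiCoeff_natCast_succ hac)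
    (bdiCoeff_neg_natCast_succ hac), two_mul_det_tridiagonal_corner, bdiCoeff_zero,
    eq_div_iff hac]
  linear_combination (1 - (-1) ^ n) * div_mul_cancel₀ (c - a) hac

end Coefficients

section WienerSeries

theorem symbolCoeff_zpow (m k : ℤ) : symbolCoeff (fun w => w ^ m) k = if m = k then 1 else 0 := by
  have hint (θ : ℝ) : Complex.exp (Complex.I * θ) ^ m * Complex.exp (-(Complex.I * k * θ)) =
      Complex.exp (Complex.I * (m - k : ℤ) * θ) := by
    rw [← Complex.exp_int_mul, ← Complex.exp_add]
    congr 1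
    push_cast
    ring
  simp only [symbolCoeff, hint]
  split_ifs with h
  · have hpi : (Real.pi : ℂ) ≠ 0 := by exact_mod_cast Real.pi_ne_zero
    have hconst : ∫ θ in (0 : ℝ)..(2 * Real.pi), Complex.exp (Complex.I * (m - k : ℤ) * θ) =
        2 * Real.pi := by simp [h]
    rw [hconst]
    field_simp
  · have hne : Complex.I * ((m - k : ℤ) : ℂ) ≠ 0 :=
      mul_ne_zero Complex.I_ne_zero (by exact_mod_cast sub_ne_zero.mpr h)
    have hperiod : Complex.I * ((m - k : ℤ) : ℂ) * ((2 * Real.pi : ℝ) : ℂ) =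
        ((m - k : ℤ) : ℂ) * (2 * Real.pi * Complex.I) := by
      push_cast
      ring
    rw [integral_exp_mul_complex hne, hperiod, Complex.exp_int_mul_two_pi_mul_I]
    simp

/-- The symbol `t` lies in the Wiener algebra, with Laurent coefficients `g`: on the unit circle it
is the sum of the absolutely convergent Laurent series `∑ k, g k * w ^ k`. -/
structure HasWienerSeries (t : ℂ → ℂ) (g : ℤ → ℂ) : Prop where
  summable_norm : Summable fun k => ‖g k‖
  hasSum : ∀ w : ℂ, ‖w‖ = 1 → HasSum (fun k : ℤ => g k * w ^ k) (t w)

namespace HasWienerSeries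

variable {s t : ℂ → ℂ} {f g : ℤ → ℂ}

theorem hasSum_symbolCoeff (h : HasWienerSeries t g) (k : ℤ) :
    HasSum (fun m => g m * symbolCoeff (fun w => w ^ m) k) (symbolCoeff t k) := by
  have hcircle (θ : ℝ) : ‖Complex.exp (Complex.I * θ)‖ = 1 := by
    rw [mul_comm, Complex.norm_exp_ofReal_mul_I]
  have hphase (θ : ℝ) : ‖Complex.exp (-(Complex.I * k * θ))‖ = 1 := by
    simp [Complex.norm_exp]
  have hsum := (intervalIntegral.hasSum_integral_of_dominated_convergence (a := 0)
    (b := 2 * Real.pi) (μ := MeasureTheory.volume)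
    (F := fun m (θ : ℝ) => g m *
      (Complex.exp (Complex.I * θ) ^ m * Complex.exp (-(Complex.I * k * θ))))
    (f := fun θ : ℝ => t (Complex.exp (Complex.I * θ)) * Complex.exp (-(Complex.I * k * θ)))
    (fun m _ => ‖g m‖) (fun m => ?_) (fun m => ?_) ?_ ?_ ?_).mul_left (1 / (2 * Real.pi : ℂ))
  · simpa only [symbolCoeff, intervalIntegral.integral_const_mul, mul_left_comm] using hsum
  · refine Continuous.aestronglyMeasurable ?_
    simp only [← Complex.exp_int_mul]
    fun_prop
  · exact .of_forall fun θ _ => by simp [hcircle, hphase]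
  · exact .of_forall fun _ _ => h.summable_norm
  · exact intervalIntegrable_const
  · refine .of_forall fun θ _ => ?_
    simpa only [mul_assoc] using (h.hasSum _ (hcircle θ)).mul_right _

theorem symbolCoeff_eq (h : HasWienerSeries t g) (k : ℤ) : symbolCoeff t k = g k := by
  have hsum := h.hasSum_symbolCoeff k
  have hother (m : ℤ) (hm : m ≠ k) : g m * symbolCoeff (fun w => w ^ m) k = 0 := by
    rw [symbolCoeff_zpow, if_neg hm, mul_zero]
  simpa [symbolCoeff_zpow] using hsum.unique (hasSum_single k hother)

theorem congr (h : HasWienerSeries t g) (hst : ∀ w, ‖w‖ = 1 → s w = t w) : HasWienerSeries s g :=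
  ⟨h.summable_norm, fun w hw => hst w hw ▸ h.hasSum w hw⟩

theorem sub (hs : HasWienerSeries s f) (ht : HasWienerSeries t g) :
    HasWienerSeries (fun w => s w - t w) (fun k => f k - g k) where
  summable_norm := (hs.summable_norm.of_norm.sub ht.summable_norm.of_norm).norm
  hasSum w hw := by simpa only [sub_mul] using (hs.hasSum w hw).sub (ht.hasSum w hw)

theorem const_mul (h : HasWienerSeries t g) (K : ℂ) :
    HasWienerSeries (fun w => K * t w) (fun k => K * g k) where
  summable_norm := (h.summable_norm.of_norm.mul_left K).norm
  hasSum w hw := by simpa only [mul_assoc] using (h.hasSum w hw).mul_left K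

theorem zpow_mul (h : HasWienerSeries t g) (m : ℤ) :
    HasWienerSeries (fun w => w ^ m * t w) (fun k => g (k - m)) where
  summable_norm := h.summable_norm.comp_injective (Equiv.subRight m).injective
  hasSum w hw := by
    have hw₀ : w ≠ 0 := norm_ne_zero_iff.mp (by simp [hw])
    have hterm (k : ℤ) : g (k - m) * w ^ k = w ^ m * (g (k - m) * w ^ (k - m)) := by
      rw [zpow_sub₀ hw₀]
      field_simp
    simp only [hterm]
    exact (Equiv.hasSum_iff (f := fun k => w ^ m * (g k * w ^ k)) (Equiv.subRight m)).mpr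
      ((h.hasSum w hw).mul_left (w ^ m))

end HasWienerSeries

end WienerSeries

section BDISymbol

theorem one_sub_mul_ne_zero {𝕜 : Type*} [NormedDivisionRing 𝕜] {x y : 𝕜} (hx : ‖x‖ < 1)
    (hy : ‖y‖ ≤ 1) : 1 - x * y ≠ 0 := by
  refine sub_ne_zero.mpr fun h => ?_
  have hlt : ‖x * y‖ < 1 :=
    (norm_mul x y).trans_lt (mul_lt_one_of_nonneg_of_lt_one_left (norm_nonneg x) hx hy)
  simp [← h] at hlt

variable {a c : ℂ}

theorem hasWienerSeries_twoSidedGeom (ha : ‖a‖ < 1) (hc : ‖c‖ < 1) :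
    HasWienerSeries (fun w => (1 - a * c) / ((1 - a * w) * (1 - c * w⁻¹))) (twoSidedGeom a c) where
  summable_norm := by
    refine Summable.of_nat_of_neg ?_ ?_
    · simpa [twoSidedGeom_natCast] using summable_geometric_of_lt_one (norm_nonneg a) ha
    · simpa [twoSidedGeom_neg, twoSidedGeom_natCast] using
        summable_geometric_of_lt_one (norm_nonneg c) hc
  hasSum w hw := by
    have hw₀ : w ≠ 0 := norm_ne_zero_iff.mp (by simp [hw])
    have hw' : ‖w⁻¹‖ = 1 := by rw [norm_inv, hw, inv_one]
    have haw : 1 - a * w ≠ 0 := one_sub_mul_ne_zero ha hw.le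
    have hcw : 1 - c * w⁻¹ ≠ 0 := one_sub_mul_ne_zero hc hw'.le
    have hnonneg : HasSum (fun n : ℕ => twoSidedGeom a c n * w ^ (n : ℤ)) (1 - a * w)⁻¹ := by
      simpa [twoSidedGeom_natCast, mul_pow] using
        hasSum_geometric_of_norm_lt_one (ξ := a * w) (by rwa [norm_mul, hw, mul_one])
    have hneg : HasSum (fun n : ℕ => twoSidedGeom a c (-n) * w ^ (-n : ℤ)) (1 - c * w⁻¹)⁻¹ := by
      simpa [twoSidedGeom_neg, twoSidedGeom_natCast, mul_pow] using
        hasSum_geometric_of_norm_lt_one (ξ := c * w⁻¹) (by rwa [norm_mul, hw', mul_one])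
    have h₀ : twoSidedGeom a c 0 * w ^ (0 : ℤ) = 1 := by simp [twoSidedGeom]
    have hvalue : (1 - a * c) / ((1 - a * w) * (1 - c * w⁻¹)) =
        (1 - a * w)⁻¹ + (1 - c * w⁻¹)⁻¹ - twoSidedGeom a c 0 * w ^ (0 : ℤ) := by
      rw [h₀, inv_add_inv haw hcw, div_sub_one (mul_ne_zero haw hcw)]
      congr 1
      linear_combination a * c * (mul_inv_cancel₀ hw₀)
    rw [hvalue]
    exact HasSum.of_nat_of_neg (f := fun k : ℤ => twoSidedGeom a c k * w ^ k) hnonneg hneg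

theorem hasWienerSeries_bdiCoeff (ha : ‖a‖ < 1) (hc : ‖c‖ < 1) :
    HasWienerSeries (fun w => (w + 1) * (w - 1) / ((1 - a * w) * (w - c))) (bdiCoeff a c) := by
  have hgeom := hasWienerSeries_twoSidedGeom ha hc
  have hac : 1 - a * c ≠ 0 := one_sub_mul_ne_zero ha hc.le
  have hcomb := ((hgeom.zpow_mul 1).sub (hgeom.zpow_mul (-1))).const_mul (1 - a * c)⁻¹
  refine hcomb.congr fun w hw => ?_
  have hw₀ : w ≠ 0 := norm_ne_zero_iff.mp (by simp [hw])
  have hwc : w - c = w * (1 - c * w⁻¹) := by field_simp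
  rw [hwc, zpow_one, zpow_neg_one]
  field_simp
  ring

theorem toeplitzDet_bdiSymbol (ha : ‖a‖ < 1) (hc : ‖c‖ < 1) (K : ℂ) (N : ℕ) :
    toeplitzDet (fun w => K * ((w + 1) * (w - 1)) / ((1 - a * w) * (w - c))) N =
      K ^ N * (((1 - a) * (1 + c) + (-1) ^ N * ((1 + a) * (1 - c))) / (2 * (1 - a * c))) := by
  have hcoeff := ((hasWienerSeries_bdiCoeff ha hc).const_mul K).symbolCoeff_eq
  have hmatrix : (Matrix.of fun i j : Fin N => K * bdiCoeff a c ((i : ℤ) - (j : ℤ))) =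
      K • toeplitz (bdiCoeff a c) N := rfl
  have hdet := two_mul_det_toeplitz_bdiCoeff (one_sub_mul_ne_zero ha hc.le) N
  simp only [← mul_div_assoc] at hcoeff
  simp only [toeplitzDet, hcoeff]
  rw [hmatrix, Matrix.det_smul, Fintype.card_fin, mul_comm (2 : ℂ) (1 - _), ← div_div, ← hdet,
    mul_div_cancel_left₀ _ two_ne_zero]

end BDISymbol

theorem emptiness_formation_probability_general {a b : ℂ} (ha : ‖a‖ < 1) (hb : 1 < ‖b‖) (N : ℕ) :
    toeplitzDet
      (fun w => ((b⁻¹ - a) / 2) * ((w + 1) * (w - 1)) / ((1 - a * w) * (w - b⁻¹))) N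
      = ((b⁻¹ - a) / 2) ^ N *
        ((1 - a) * (1 + b) / (2 * (b - a)) +
          (-1 : ℂ) ^ N * ((1 + a) * (1 - b) / (2 * (a - b)))) := by
  have hc : ‖b⁻¹‖ < 1 := by
    rw [norm_inv]
    exact inv_lt_one_of_one_lt₀ hb
  have hb₀ : b ≠ 0 := norm_pos_iff.mp (one_pos.trans hb)
  have hba : b - a ≠ 0 := sub_ne_zero.mpr fun h => (ha.trans hb).ne (h ▸ rfl)
  have hab : a - b ≠ 0 := by rwa [← neg_sub, neg_ne_zero]
  have hdenom : 1 - a * b⁻¹ = (b - a) / b := by field_simp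
  rw [toeplitzDet_bdiSymbol ha hc, hdenom]
  field_simp
  ring

/-- Closed formula for the emptiness formation probability for the BDI chain with
`f(z) = z⁻²(z−a)²(z−b)²`, `0 < |a| < 1 < |b|`, `ab ≠ 1`. -/
theorem emptiness_formation_probability
    (a b : ℝ) (ha0 : 0 < |a|) (ha1 : |a| < 1) (hb : 1 < |b|) (hab : a * b ≠ 1)
    (N : ℕ) (hN : 1 ≤ N) :
    toeplitzDet
      (fun w => (((b : ℂ)⁻¹ - a) / 2) * ((w + 1) * (w - 1)) /
        ((1 - (a : ℂ) * w) * (w - (b : ℂ)⁻¹))) N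
      = (((b : ℂ)⁻¹ - a) / 2) ^ N *
        ((1 - (a : ℂ)) * (1 + (b : ℂ)) / (2 * ((b : ℂ) - a)) +
          (-1 : ℂ) ^ N * ((1 + (a : ℂ)) * (1 - (b : ℂ)) / (2 * ((a : ℂ) - b)))) :=
  emptiness_formation_probability_general (by simpa using ha1) (by simpa using hb) N
end
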